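/- arXiv:2604.14462 — 2 statements merged into one kernel-verified Lean document; each statement's English description precedes it below -/
import Mathlib

section
/- For all m, n ≥ 0, the poset NC(S_{m,n}) admits a symmetric chain decomposition: its underlying set can be partitioned into saturated chains C (each consecutive pair of elements of C is a covering pair in NC(S_{m,n})) such that for each chain C, ρ(min C) + ρ(max C) = (m + n + 2) − 1, where ρ(π) = (m + n + 2) − (number of blocks of π). -/
open Finset

/-- A finpartition of a finite set of points in the plane is *noncrossing* if the
convex hulls (over `ℝ`) of its blocks are pairwise disjoint. -/
def IsNoncrossing {P : Finset ℂ} (π : Finpartition P) : Prop :=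
  (π.parts : Set (Finset ℂ)).Pairwise fun B₁ B₂ =>
    Disjoint (convexHull ℝ (B₁ : Set ℂ)) (convexHull ℝ (B₂ : Set ℂ))

/-- The poset `NC(P)` of noncrossing partitions of `P`, ordered by refinement:
`π ≤ μ` iff every block of `μ` is a union of blocks of `π`. -/
abbrev NC (P : Finset ℂ) : Type := {π : Finpartition P // IsNoncrossing π}

/-- The blocks of a noncrossing partition. -/
def NC.parts {P : Finset ℂ} (π : NC P) : Finset (Finset ℂ) := π.1.parts

/-- Two points lie in a common block of a noncrossing partition. -/
def NC.SameBlock {P : Finset ℂ} (π : NC P) (a b : ℂ) : Prop :=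
  ∃ B ∈ π.parts, a ∈ B ∧ b ∈ B

/-- The real point `x_k = -1 + 2k/(m+1)` of the semicircular configuration `S_{m,n}`. -/
noncomputable def Sx (m k : ℕ) : ℂ := -1 + 2 * (k : ℂ) / ((m : ℂ) + 1)

/-- The circle point `y_j = exp(iπj/(n+1))` of the semicircular configuration `S_{m,n}`. -/
noncomputable def Sy (n j : ℕ) : ℂ :=
  Complex.exp ((Real.pi : ℂ) * (j : ℂ) / ((n : ℂ) + 1) * Complex.I)

/-- The semicircular configuration `S_{m,n}`: the `m+2` real points
`x_k = -1 + 2k/(m+1)` for `k = 0, …, m+1` (including the endpoints `±1`) together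
with the `n` points `y_j = exp(iπj/(n+1))` for `j = 1, …, n` on the open upper
unit semicircle. -/
noncomputable def Sconfig (m n : ℕ) : Finset ℂ :=
  ((Finset.range (m + 2)).image fun k : ℕ => Sx m k) ∪
    ((Finset.Icc 1 n).image fun j : ℕ => Sy n j)

/-!
Number the points counterclockwise, starting with those on the axis. The noncrossing partitions are
then the equivalence relations in which no two classes alternate and no class skips a point of the
axis lying between two of its members: hulls of alternating classes meet because diagonals cross,
and hulls of the others are separated by lines.

Sort such partitions of `[a, e]` by the predecessor `i` of the last point `e` in its class. If
`i + 1 < e`, which is only possible for `e` off the axis, the class of `i` and `e` separates the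
rest, so that one gets the product of the posets for `[a, i]` and `[i + 1, e - 1]`, with all ranks
raised by one. The partitions for which `i + 1 = e` or `e` has no predecessor form together the
product of the poset for `[a, e - 1]` with a two-element chain. All these pieces have the same
centre of symmetry of ranks, and a product of two symmetric chains splits into symmetric chains
(hooks), which gives the decomposition by induction.
-/

namespace SemicircleNC

section SymmetricChains

variable {α β ι : Type*} [Preorder α] [Preorder β]

/-- One step up in a preorder with a rank function `ρ`. Saturated chains are the lists linked by
this relation; it implies covering as soon as `ρ` is strictly monotone, see `RankStep.covBy`. -/
def RankStep (ρ : α → ℕ) (x y : α) : Prop := x ≤ y ∧ ρ y = ρ x + 1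

/-- A symmetric saturated chain for the rank function `ρ`, listed from bottom to top: the ranks of
its two ends add up to `h`. -/
structure IsSymmetricChain (ρ : α → ℕ) (h : ℕ) (l : List α) : Prop where
  ne_nil : l ≠ []
  isChain : l.IsChain (RankStep ρ)
  rank_add_rank : ∀ x ∈ l.head?, ∀ y ∈ l.getLast?, ρ x + ρ y = h

/-- A partition of the set `S` into symmetric chains, the chains being taken with respect to the
ambient order and rank function. -/
def HasSymmetricChainDecomposition (ρ : α → ℕ) (S : Set α) (h : ℕ) : Prop :=
  ∃ C : Set (List α), (∀ l ∈ C, IsSymmetricChain ρ h l ∧ ∀ x ∈ l, x ∈ S) ∧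
    ∀ x ∈ S, ∃! l, l ∈ C ∧ x ∈ l

theorem RankStep.covBy {γ : Type*} [PartialOrder γ] {ρ : γ → ℕ} (hρ : StrictMono ρ) {x y : γ}
    (hxy : RankStep ρ x y) : x ⋖ y := by
  refine ⟨lt_of_le_of_ne hxy.1 ?_, fun z hxz hzy => ?_⟩
  · rintro rfl
    exact absurd hxy.2 (by omega)
  · have := hρ hxz
    have := hρ hzy
    have := hxy.2
    omega

theorem nodup_of_isChain_rankStep {ρ : α → ℕ} {l : List α} (hl : l.IsChain (RankStep ρ)) :
    l.Nodup := by
  have hlt : (l.map ρ).IsChain (· < ·) :=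
    (List.isChain_map ρ).2 (hl.imp fun x y hxy => by have := hxy.2; omega)
  exact .of_map ρ hlt.pairwise.nodup

theorem IsSymmetricChain.map {ρ : α → ℕ} {ρ' : β → ℕ} {h c : ℕ} {l : List α} {f : α → β}
    (hl : IsSymmetricChain ρ h l) (hmono : MonotoneOn f {x | x ∈ l})
    (hrank : ∀ x ∈ l, ρ' (f x) = ρ x + c) : IsSymmetricChain ρ' (h + 2 * c) (l.map f) where
  ne_nil := by simpa using hl.ne_nil
  isChain := (List.isChain_map f).2 <| hl.isChain.imp_of_mem_imp fun x y hx hy hxy =>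
    ⟨hmono hx hy hxy.1, by rw [hrank x hx, hrank y hy, hxy.2]; omega⟩
  rank_add_rank := by
    simp only [List.head?_map, List.getLast?_map, Option.mem_map]
    rintro _ ⟨x, hx, rfl⟩ _ ⟨y, hy, rfl⟩
    rw [hrank x (List.mem_of_mem_head? hx), hrank y (List.mem_of_getLast? hy),
      ← hl.rank_add_rank x hx y hy]
    omega

/-- The hook runs along the bottom row of a grid and then up its last column. -/
theorem isSymmetricChain_hook {ρ : α → ℕ} {ρ' : β → ℕ} {h : ℕ} {k : List α} {x : α} {y : β}
    {t : List β} (hk : (k ++ [x]).IsChain (RankStep ρ)) (ht : (y :: t).IsChain (RankStep ρ'))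
    (hh : ∀ a ∈ (k ++ [x]).head?, ∀ b ∈ (y :: t).getLast?, ρ a + ρ x + (ρ' y + ρ' b) = h) :
    IsSymmetricChain (fun z : α × β => ρ z.1 + ρ' z.2) h (k.map (·, y) ++ (y :: t).map (x, ·)) where
  ne_nil := by simp
  isChain := by
    have hrow : ((k ++ [x]).map (·, y)).IsChain (RankStep fun z : α × β => ρ z.1 + ρ' z.2) :=
      (List.isChain_map _).2 <| hk.imp fun a b hab =>
        ⟨Prod.mk_le_mk.2 ⟨hab.1, le_rfl⟩, by have := hab.2; simp only; omega⟩
    have hcolumn : ((y :: t).map (x, ·)).IsChain (RankStep fun z : α × β => ρ z.1 + ρ' z.2) :=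
      (List.isChain_map _).2 <| ht.imp fun a b hab =>
        ⟨Prod.mk_le_mk.2 ⟨le_rfl, hab.1⟩, by have := hab.2; simp only; omega⟩
    rw [List.map_append] at hrow
    obtain ⟨hrow, -, hcorner⟩ := List.isChain_append.1 hrow
    exact List.isChain_append.2 ⟨hrow, hcolumn, by simpa using hcorner⟩
  rank_add_rank := by
    intro u hu v hv
    obtain ⟨a, ha, rfl⟩ : ∃ a ∈ (k ++ [x]).head?, (a, y) = u := by
      cases k <;> simp_all
    obtain ⟨b, hb, rfl⟩ : ∃ b ∈ (y :: t).getLast?, (x, b) = v := by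
      rwa [List.getLast?_append_of_ne_nil _ (by simp), List.getLast?_map, Option.mem_map] at hv
    have := hh a ha b hb
    simp only
    omega

namespace HasSymmetricChainDecomposition

variable {ρ : α → ℕ} {ρ' : β → ℕ} {S T : Set α} {S' : Set β} {h h' : ℕ}

theorem empty : HasSymmetricChainDecomposition ρ (∅ : Set α) h :=
  ⟨∅, by simp, by simp⟩

theorem of_isSymmetricChain {l : List α} (hl : IsSymmetricChain ρ h l) :
    HasSymmetricChainDecomposition ρ {x | x ∈ l} h :=
  ⟨{l}, by rintro _ rfl; exact ⟨hl, fun _ => id⟩,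
    fun _ hx => ⟨l, ⟨rfl, hx⟩, fun _ hl' => hl'.1⟩⟩

theorem iUnion {S : ι → Set α} (hdisj : Pairwise (Function.onFun Disjoint S))
    (hS : ∀ i, HasSymmetricChainDecomposition ρ (S i) h) :
    HasSymmetricChainDecomposition ρ (⋃ i, S i) h := by
  choose C hC hCS using hS
  refine ⟨⋃ i, C i, fun l hl => ?_, fun x hx => ?_⟩
  · obtain ⟨i, hi⟩ := Set.mem_iUnion.1 hl
    exact ⟨(hC i l hi).1, fun x hx => Set.mem_iUnion_of_mem i ((hC i l hi).2 x hx)⟩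
  · obtain ⟨i, hi⟩ := Set.mem_iUnion.1 hx
    obtain ⟨l, ⟨hl, hxl⟩, hunique⟩ := hCS i x hi
    refine ⟨l, ⟨Set.mem_iUnion_of_mem i hl, hxl⟩, fun l' ⟨hl', hxl'⟩ => ?_⟩
    obtain ⟨j, hj⟩ := Set.mem_iUnion.1 hl'
    obtain rfl : i = j := by
      by_contra hij
      exact Set.disjoint_left.1 (hdisj hij) hi ((hC j l' hj).2 x hxl')
    exact hunique l' ⟨hj, hxl'⟩

theorem union (hdisj : Disjoint S T) (hS : HasSymmetricChainDecomposition ρ S h)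
    (hT : HasSymmetricChainDecomposition ρ T h) :
    HasSymmetricChainDecomposition ρ (S ∪ T) h := by
  rw [Set.union_eq_iUnion]
  exact iUnion (pairwise_disjoint_on_bool.2 hdisj) (Bool.forall_bool.2 ⟨hT, hS⟩)

theorem image {f : α → β} {c : ℕ} (hS : HasSymmetricChainDecomposition ρ S h)
    (hinj : Set.InjOn f S) (hmono : MonotoneOn f S) (hrank : ∀ x ∈ S, ρ' (f x) = ρ x + c) :
    HasSymmetricChainDecomposition ρ' (f '' S) (h + 2 * c) := by
  obtain ⟨C, hC, hCS⟩ := hS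
  refine ⟨List.map f '' C, ?_, ?_⟩
  · rintro _ ⟨l, hl, rfl⟩
    obtain ⟨hsymm, hlS⟩ := hC l hl
    refine ⟨hsymm.map (hmono.mono hlS) fun x hx => hrank x (hlS x hx), ?_⟩
    simp only [List.mem_map]
    rintro _ ⟨x, hx, rfl⟩
    exact Set.mem_image_of_mem f (hlS x hx)
  · rintro _ ⟨x, hx, rfl⟩
    obtain ⟨l, ⟨hl, hxl⟩, hunique⟩ := hCS x hx
    refine ⟨l.map f, ⟨Set.mem_image_of_mem _ hl, List.mem_map_of_mem hxl⟩, ?_⟩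
    rintro _ ⟨⟨l', hl', rfl⟩, hxl'⟩
    obtain ⟨y, hy, hyx⟩ := List.mem_map.1 hxl'
    obtain rfl := hinj ((hC l' hl').2 y hy) hx hyx
    rw [hunique l' ⟨hl', hy⟩]

theorem comap_orderEmbedding (f : β ↪o α)
    (hf : HasSymmetricChainDecomposition ρ (Set.range f) h) :
    HasSymmetricChainDecomposition (ρ ∘ f) Set.univ h := by
  rcases isEmpty_or_nonempty β with hβ | hβ
  · rw [Set.univ_eq_empty_iff.2 hβ]
    exact empty
  · have hleft := Function.leftInverse_invFun f.injective
    have himage := hf.image (f := Function.invFun f) (ρ' := ρ ∘ f) (c := 0)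
      hleft.rightInvOn_range.injOn ?_ ?_
    · rwa [← Set.range_comp, hleft.comp_eq_id, Set.range_id] at himage
    · rintro _ ⟨x, rfl⟩ _ ⟨y, rfl⟩ hxy
      rwa [hleft x, hleft y, ← f.le_iff_le]
    · rintro _ ⟨x, rfl⟩
      simp [hleft x]

theorem grid {l : List α} {l' : List β} (hl : l.IsChain (RankStep ρ))
    (hl' : l'.IsChain (RankStep ρ'))
    (hh : ∀ x ∈ l.head?, ∀ y ∈ l.getLast?, ∀ x' ∈ l'.head?, ∀ y' ∈ l'.getLast?,
      ρ x + ρ y + (ρ' x' + ρ' y') = h) :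
    HasSymmetricChainDecomposition (fun z : α × β => ρ z.1 + ρ' z.2) ({x | x ∈ l} ×ˢ {y | y ∈ l'})
      h := by
  induction l' generalizing l with
  | nil => simpa using empty
  | cons y t ih =>
    obtain rfl | ⟨k, x, rfl⟩ := l.eq_nil_or_concat'
    · simpa using empty
    obtain ⟨hk, -, hkx⟩ := List.isChain_append.1 hl
    obtain ⟨hyt, ht⟩ := List.isChain_cons.1 hl'
    have hrest := ih hk ht fun a ha b hb c hc d hd => by
      have hab := hh a (List.mem_head?_append_of_mem_head? ha) x (by simp) y (by simp) d
        (List.mem_getLast?_cons hd)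
      have hbx := (hkx b hb x (by simp)).2
      have hyc := (hyt c hc).2
      omega
    have hhook := of_isSymmetricChain (isSymmetricChain_hook hl hl' fun a ha b hb =>
      hh a ha x (by simp) y (by simp) b hb)
    have hxk := List.nodup_append.1 (nodup_of_isChain_rankStep hl)
    have hyt' := List.nodup_cons.1 (nodup_of_isChain_rankStep hl')
    convert hhook.union ?_ hrest using 1
    · ext ⟨a, b⟩
      simp only [Set.mem_prod, Set.mem_union, Set.mem_ofPred_eq, List.mem_append, List.mem_map,
        List.mem_cons, List.not_mem_nil, Prod.mk.injEq]
      grind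
    · refine Set.disjoint_left.2 ?_
      rintro ⟨a, b⟩
      simp only [Set.mem_prod, Set.mem_ofPred_eq, List.mem_append, List.mem_map, List.mem_cons,
        Prod.mk.injEq]
      grind

theorem prod (hS : HasSymmetricChainDecomposition ρ S h)
    (hS' : HasSymmetricChainDecomposition ρ' S' h') :
    HasSymmetricChainDecomposition (fun z : α × β => ρ z.1 + ρ' z.2) (S ×ˢ S') (h + h') := by
  obtain ⟨C, hC, hCS⟩ := hS
  obtain ⟨C', hC', hCS'⟩ := hS'
  have hunion : S ×ˢ S' =
      ⋃ c : C × C', ({x | x ∈ c.1.1} ×ˢ {y | y ∈ c.2.1} : Set (α × β)) := by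
    ext ⟨x, y⟩
    simp only [Set.mem_prod, Set.mem_iUnion, Set.mem_ofPred_eq]
    constructor
    · rintro ⟨hx, hy⟩
      obtain ⟨l, ⟨hl, hxl⟩, -⟩ := hCS x hx
      obtain ⟨l', ⟨hl', hyl'⟩, -⟩ := hCS' y hy
      exact ⟨⟨⟨l, hl⟩, ⟨l', hl'⟩⟩, hxl, hyl'⟩
    · rintro ⟨c, hx, hy⟩
      exact ⟨(hC _ c.1.2).2 x hx, (hC' _ c.2.2).2 y hy⟩
  rw [hunion]
  refine iUnion (fun c d hcd => ?_) fun c => ?_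
  · refine Set.disjoint_left.2 fun ⟨x, y⟩ ⟨hxc, hyc⟩ ⟨hxd, hyd⟩ => hcd (Prod.ext ?_ ?_)
    · exact Subtype.ext ((hCS x ((hC _ c.1.2).2 x hxc)).unique ⟨c.1.2, hxc⟩ ⟨d.1.2, hxd⟩)
    · exact Subtype.ext ((hCS' y ((hC' _ c.2.2).2 y hyc)).unique ⟨c.2.2, hyc⟩ ⟨d.2.2, hyd⟩)
  · have hsymm := (hC _ c.1.2).1
    have hsymm' := (hC' _ c.2.2).1
    exact grid hsymm.isChain hsymm'.isChain fun x hx y hy x' hx' y' hy' => by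
      rw [hsymm.rank_add_rank x hx y hy, hsymm'.rank_add_rank x' hx' y' hy']

theorem exists_saturated_chains {γ : Type*} [PartialOrder γ] {ρ : γ → ℕ} (hρ : StrictMono ρ)
    (hγ : HasSymmetricChainDecomposition ρ Set.univ h) :
    ∃ chains : Set (List γ), [] ∉ chains ∧ (∀ x, ∃! l, l ∈ chains ∧ x ∈ l) ∧
      (∀ l ∈ chains, l.IsChain (· ⋖ ·)) ∧
      ∀ l ∈ chains, ∀ hl : l ≠ [], ρ (l.head hl) + ρ (l.getLast hl) = h := by
  obtain ⟨C, hC, hCuniv⟩ := hγ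
  exact ⟨C, fun hnil => (hC _ hnil).1.ne_nil rfl, fun x => hCuniv x trivial,
    fun l hl => (hC l hl).1.isChain.imp fun _ _ => RankStep.covBy hρ,
    fun l hl hne => (hC l hl).1.rank_add_rank _ (List.head_mem_head? hne) _
      (List.getLast_mem_getLast? hne)⟩

end HasSymmetricChainDecomposition

end SymmetricChains

section AdmissibleRelations

variable {p a b c d e f i j x y : ℕ} {r r' s s' u : Setoid ℕ}

/-- The equivalence relation on `ℕ` whose only nontrivial class is the interval `[a, b)`. A
partition of `[a, b)` is encoded as an equivalence relation below `window a b`, so that partitions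
of different intervals live in one lattice. -/
def window (a b : ℕ) : Setoid ℕ where
  r x y := x = y ∨ x ∈ Set.Ico a b ∧ y ∈ Set.Ico a b
  iseqv := ⟨fun _ => .inl rfl, by grind, by grind⟩

theorem window_apply : window a b x y ↔ x = y ∨ x ∈ Set.Ico a b ∧ y ∈ Set.Ico a b :=
  Iff.rfl

theorem window_eq_bot (hba : b ≤ a + 1) : window a b = ⊥ := by
  ext x y
  simp only [window_apply, Set.mem_Ico, Setoid.bot_def]
  omega

/-- The combinatorial model of noncrossing partitions: partitions of `[a, b)` for points in convex
position numbered counterclockwise, where in addition the points numbered below `p` lie on a line,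
so that the class of `i` and `k` contains every point between them on that line. -/
structure IsAdmissible (p a b : ℕ) (r : Setoid ℕ) : Prop where
  le_window : r ≤ window a b
  noncrossing : ∀ {i j k l}, i < j → j < k → k < l → r i k → r j l → r i j
  line : ∀ {i j k}, i < j → j < k → k < p → r i k → r i j

theorem IsAdmissible.bot : IsAdmissible p a b ⊥ where
  le_window := bot_le
  noncrossing := by simp only [Setoid.bot_def]; omega
  line := by simp only [Setoid.bot_def]; omega

theorem IsAdmissible.eq_bot (hr : IsAdmissible p a b r) (hba : b ≤ a + 1) : r = ⊥ :=
  le_bot_iff.1 (window_eq_bot hba ▸ hr.le_window)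

theorem IsAdmissible.mono (hr : IsAdmissible p a b r) (hca : c ≤ a) (hbd : b ≤ d) :
    IsAdmissible p c d r where
  le_window := hr.le_window.trans fun x y hxy => by
    simp only [window_apply, Set.mem_Ico] at hxy ⊢
    omega
  noncrossing := hr.noncrossing
  line := hr.line

theorem IsAdmissible.inf_window (hr : IsAdmissible p a b r) :
    IsAdmissible p c d (r ⊓ window c d) where
  le_window := inf_le_right
  noncrossing := by
    simp only [Setoid.inf_def, window_apply, Set.mem_Ico, Pi.inf_apply, inf_Prop_eq]
    intro i j k l hij hjk hkl hik hjl
    exact ⟨hr.noncrossing hij hjk hkl hik.1 hjl.1, by omega⟩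
  line := by
    simp only [Setoid.inf_def, window_apply, Set.mem_Ico, Pi.inf_apply, inf_Prop_eq]
    intro i j k hij hjk hkp hik
    exact ⟨hr.line hij hjk hkp hik.1, by omega⟩

section Glue

/-- The partition made of `r` on the points up to `i` and of `s` on the points after `i`, except
that `e` is removed from its class and put into the class of `i`. -/
def glue (i e : ℕ) (r s : Setoid ℕ) : Setoid ℕ :=
  Setoid.ker fun x =>
    if x ≤ i then Sum.inl (Quotient.mk r x)
    else if x = e then Sum.inl (Quotient.mk r i) else Sum.inr (Quotient.mk s x)

theorem glue_apply (hie : i < e) : glue i e r s x y ↔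
    x ≤ i ∧ y ≤ i ∧ r x y ∨ x ≤ i ∧ y = e ∧ r x i ∨ x = e ∧ y ≤ i ∧ r i y ∨ x = e ∧ y = e ∨
      i < x ∧ x ≠ e ∧ i < y ∧ y ≠ e ∧ s x y := by
  rw [glue, Setoid.ker_def]
  grind [Quotient.eq, Setoid.refl']

theorem glue_mono (hie : i < e) (hr : r ≤ r') (hs : s ≤ s') :
    glue i e r s ≤ glue i e r' s' := by
  intro x y
  rw [glue_apply hie, glue_apply hie]
  have := @hr
  have := @hs
  tauto

theorem le_glue_left (hie : i < e) (hr : r ≤ window a (i + 1)) : r ≤ glue i e r s := by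
  intro x y hxy
  have := hr hxy
  rw [window_apply, Set.mem_Ico, Set.mem_Ico] at this
  obtain rfl | h := this
  · exact Setoid.refl' _ x
  · exact (glue_apply hie).2 (.inl ⟨by omega, by omega, hxy⟩)

theorem glue_inf_window_left (hie : i < e) (hr : r ≤ window a (i + 1)) :
    glue i e r s ⊓ window a (i + 1) = r := by
  refine le_antisymm ?_ (le_inf (le_glue_left hie hr) hr)
  rintro x y ⟨hglue, rfl | hxy⟩
  · exact Setoid.refl' r x
  · rw [glue_apply hie] at hglue
    grind [Setoid.refl', Setoid.trans']

theorem glue_inf_window_right (hie : i < e) (hs : s ≤ window (i + 1) e) :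
    glue i e r s ⊓ window (i + 1) e = s := by
  refine le_antisymm ?_ (le_inf ?_ hs)
  · rintro x y ⟨hglue, rfl | hxy⟩
    · exact Setoid.refl' s x
    · rw [glue_apply hie] at hglue
      grind
  · intro x y hxy
    obtain rfl | h := hs hxy
    · exact Setoid.refl' _ x
    · rw [glue_apply hie]
      grind

theorem isAdmissible_glue (hai : a ≤ i) (hie : i < e) (hp : p ≤ e ∨ i + 1 = e)
    (hr : IsAdmissible p a (i + 1) r) (hs : IsAdmissible p (i + 1) e s) :
    IsAdmissible p a (e + 1) (glue i e r s) where
  le_window := by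
    intro x y
    have := @hr.le_window x y
    have := @hr.le_window x i
    have := @hr.le_window i y
    have := @hs.le_window x y
    simp only [glue_apply hie, window_apply, Set.mem_Ico] at *
    grind
  noncrossing := by
    intro x y z w hxy hyz hzw hxz hyw
    rw [glue_apply hie] at hxz hyw ⊢
    have := @hr.noncrossing x y z w
    have := @hr.noncrossing x y z i
    have (hx : r x i) (hy : r y i) : r x y := r.trans' hx (r.symm' hy)
    have := @hs.noncrossing x y z w
    have := @hs.le_window y w
    have := @hs.le_window x z
    simp only [window_apply, Set.mem_Ico] at *
    rcases hxz with h | h | h | h | h <;> grind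
  line := by
    intro x y z hxy hyz hzp hxz
    rw [glue_apply hie] at hxz ⊢
    have := @hr.line x y z
    have := @hr.line x y i
    have := @hs.line x y z
    have := @hs.le_window x z
    simp only [window_apply, Set.mem_Ico] at *
    rcases hxz with h | h | h | h | h <;> grind

/-- `i` is the predecessor of `e` in its class. -/
def IsPred (u : Setoid ℕ) (e i : ℕ) : Prop :=
  i < e ∧ u i e ∧ ∀ k, i < k → k < e → ¬ u k e

theorem isPred_glue (hie : i < e) : IsPred (glue i e r s) e i := by
  refine ⟨hie, (glue_apply hie).2 (by simp), fun k => ?_⟩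
  rw [glue_apply hie]
  omega

theorem IsPred.exists_of_lt (hje : j < e) (hu : u j e) : ∃ i, j ≤ i ∧ IsPred u e i := by
  obtain ⟨i, ⟨hie, hui⟩, hmax⟩ := BddAbove.exists_isGreatest_of_nonempty
    (S := {k | k < e ∧ u k e}) ⟨e, fun k hk => hk.1.le⟩ ⟨j, hje, hu⟩
  exact ⟨i, hmax ⟨hje, hu⟩, hie, hui, fun k hik hke huk => hik.not_ge (hmax ⟨hke, huk⟩)⟩

theorem IsPred.unique (hi : IsPred u e i) (hj : IsPred u e j) : i = j :=
  le_antisymm (not_lt.1 fun h => hj.2.2 i h hi.1 hi.2.1)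
    (not_lt.1 fun h => hi.2.2 j h hj.1 hj.2.1)

theorem glue_inf_window (hu : IsAdmissible p a (e + 1) u) (hi : IsPred u e i) :
    glue i e (u ⊓ window a (i + 1)) (u ⊓ window (i + 1) e) = u := by
  obtain ⟨hie, hui, hmax⟩ := hi
  have hsep {x y : ℕ} (hxi : x ≤ i) (hiy : i < y) (hye : y < e) : ¬ u x y := fun hxy =>
    hmax y hiy hye <| by
      obtain rfl | hxi := hxi.eq_or_lt
      · exact u.trans' (u.symm' hxy) hui
      · exact u.trans' (u.symm' hxy) (u.trans' (hu.noncrossing hxi hiy hye hxy hui) hui)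
  refine le_antisymm (fun x y hxy => ?_) ?_
  · obtain ⟨-, -, h⟩ | ⟨-, rfl, h⟩ | ⟨rfl, -, h⟩ | ⟨rfl, rfl⟩ | ⟨-, -, -, -, h⟩ :=
      (glue_apply hie).1 hxy
    exacts [h.1, u.trans' h.1 hui, u.trans' (u.symm' hui) h.1, u.refl' _, h.1]
  · suffices hlt : ∀ {x y}, x < y → u x y →
        glue i e (u ⊓ window a (i + 1)) (u ⊓ window (i + 1) e) x y by
      intro x y hxy
      obtain h | rfl | h := lt_trichotomy x y
      exacts [hlt h hxy, Setoid.refl' _ _, Setoid.symm' _ (hlt h (u.symm' hxy))]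
    intro x y hlt hxy
    have hmem := (hu.le_window hxy).resolve_left hlt.ne
    have hxi (hye : y = e) : u x i := u.trans' hxy (hye ▸ u.symm' hui)
    simp only [glue_apply hie, Setoid.inf_def, Pi.inf_apply, inf_Prop_eq, window_apply,
      Set.mem_Ico] at hmem ⊢
    grind

theorem image_glue (hai : a ≤ i) (hie : i < e) (hp : p ≤ e ∨ i + 1 = e) :
    (fun z : Setoid ℕ × Setoid ℕ => glue i e z.1 z.2) ''
        ({r | IsAdmissible p a (i + 1) r} ×ˢ {s | IsAdmissible p (i + 1) e s}) =
      {u | IsAdmissible p a (e + 1) u ∧ IsPred u e i} := by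
  ext u
  constructor
  · rintro ⟨⟨r, s⟩, ⟨hr, hs⟩, rfl⟩
    exact ⟨isAdmissible_glue hai hie hp hr hs, isPred_glue hie⟩
  · rintro ⟨hu, hi⟩
    exact ⟨(u ⊓ window a (i + 1), u ⊓ window (i + 1) e), ⟨hu.inf_window, hu.inf_window⟩,
      glue_inf_window hu hi⟩

end Glue

section Rank

/-- The elements that are not the greatest of their class. -/
def nonmax (r : Setoid ℕ) : Set ℕ := {x | ∃ y, x < y ∧ r x y}

/-- The rank of a partition of a finite set: the number of elements minus the number of classes,
counted as the number of elements that are not the greatest of their class. -/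
noncomputable def rank (r : Setoid ℕ) : ℕ := (nonmax r).ncard

theorem rank_bot : rank ⊥ = 0 := by
  have : nonmax ⊥ = ∅ := by
    ext x
    simp only [nonmax, Setoid.bot_def]
    grind
  rw [rank, this, Set.ncard_empty]

theorem nonmax_subset_Ico (hr : r ≤ window a b) : nonmax r ⊆ Set.Ico a b := by
  rintro x ⟨y, hxy, h⟩
  exact ((hr h).resolve_left hxy.ne).1

theorem finite_nonmax (hr : r ≤ window a b) : (nonmax r).Finite :=
  (Set.finite_Ico a b).subset (nonmax_subset_Ico hr)

theorem nonmax_glue (hie : i < e) (hr : r ≤ window a (i + 1)) (hs : s ≤ window (i + 1) e) :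
    nonmax (glue i e r s) = insert i (nonmax r ∪ nonmax s) := by
  ext x
  simp only [nonmax, glue_apply hie, Set.mem_ofPred_eq, Set.mem_insert_iff, Set.mem_union]
  constructor
  · rintro ⟨y, hxy, h⟩
    grind
  · rintro (rfl | ⟨y, hxy, h⟩ | ⟨y, hxy, h⟩)
    · exact ⟨e, hie, by simp⟩
    · have := (hr h).resolve_left hxy.ne
      exact ⟨y, by grind⟩
    · have := (hs h).resolve_left hxy.ne
      exact ⟨y, by grind⟩

theorem rank_glue (hie : i < e) (hr : r ≤ window a (i + 1)) (hs : s ≤ window (i + 1) e) :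
    rank (glue i e r s) = rank r + rank s + 1 := by
  have hir : i ∉ nonmax r := by
    rintro ⟨y, hiy, h⟩
    have := (hr h).resolve_left hiy.ne
    grind
  have his : i ∉ nonmax s := fun h => by simpa using nonmax_subset_Ico hs h
  have hdisj : Disjoint (nonmax r) (nonmax s) := Set.disjoint_left.2 fun x hxr hxs => by
    have := nonmax_subset_Ico hr hxr
    have := nonmax_subset_Ico hs hxs
    grind
  rw [rank, nonmax_glue hie hr hs, Set.ncard_insert_of_notMem (by simp [hir, his])
    ((finite_nonmax hr).union (finite_nonmax hs)),
    Set.ncard_union_eq hdisj (finite_nonmax hr) (finite_nonmax hs), rank, rank]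

end Rank

section Adjoin

/-- Adds the point `f + 1` to a partition `z.1` of a set of points up to `f`, as a class of its own
or as a new element of the class of `f`, according to `z.2`. -/
def adjoin (f : ℕ) (z : Setoid ℕ × Bool) : Setoid ℕ :=
  if z.2 then glue f (f + 1) z.1 ⊥ else z.1

theorem adjoin_inf_window (hr : r ≤ window a (f + 1)) (t : Bool) :
    adjoin f (r, t) ⊓ window a (f + 1) = r := by
  cases t
  · simpa [adjoin] using hr
  · exact glue_inf_window_left f.lt_succ_self hr

theorem adjoin_apply (hr : r ≤ window a (f + 1)) (t : Bool) :
    adjoin f (r, t) f (f + 1) ↔ t = true := by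
  cases t
  · have hf : ¬ r f (f + 1) := fun h => by simpa using (hr h).resolve_left (by omega)
    exact iff_of_false hf (by simp)
  · exact iff_of_true ((glue_apply f.lt_succ_self).2 (by simp)) rfl

theorem injOn_adjoin : Set.InjOn (adjoin f) ({r | IsAdmissible p a (f + 1) r} ×ˢ Set.univ) := by
  rintro ⟨r, t⟩ ⟨hr, -⟩ ⟨r', t'⟩ ⟨hr', -⟩ h
  have hr : r ≤ window a (f + 1) := IsAdmissible.le_window hr
  have hr' : r' ≤ window a (f + 1) := IsAdmissible.le_window hr'
  have hrr' : r = r' := by rw [← adjoin_inf_window hr t, h, adjoin_inf_window hr']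
  have htt' : t = t' := by rw [Bool.eq_iff_iff, ← adjoin_apply hr, h, adjoin_apply hr']
  rw [hrr', htt']

theorem monotoneOn_adjoin :
    MonotoneOn (adjoin f) ({r | IsAdmissible p a (f + 1) r} ×ˢ Set.univ) := by
  rintro ⟨r, t⟩ ⟨hr, -⟩ ⟨r', t'⟩ ⟨hr', -⟩ ⟨hrr', htt'⟩
  cases t <;> cases t'
  · exact hrr'
  · exact hrr'.trans (le_glue_left f.lt_succ_self hr'.le_window)
  · exact absurd (show true ≤ false from htt') (by decide)
  · exact glue_mono f.lt_succ_self hrr' le_rfl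

theorem rank_adjoin (hr : r ≤ window a (f + 1)) (t : Bool) :
    rank (adjoin f (r, t)) = rank r + t.toNat := by
  cases t
  · rfl
  · simp [adjoin, rank_glue f.lt_succ_self hr bot_le, rank_bot]

theorem image_adjoin (haf : a ≤ f) :
    adjoin f '' ({r | IsAdmissible p a (f + 1) r} ×ˢ Set.univ) =
      {u | IsAdmissible p a (f + 2) u ∧ ∀ i, IsPred u (f + 1) i → i = f} := by
  ext u
  constructor
  · rintro ⟨⟨r, t⟩, ⟨hr, -⟩, rfl⟩
    cases t
    · refine ⟨hr.mono le_rfl (by omega), fun i hi => ?_⟩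
      have := (hr.le_window hi.2.1).resolve_left hi.1.ne
      simp at this
    · exact ⟨isAdmissible_glue haf f.lt_succ_self (.inr rfl) hr .bot,
        fun i hi => hi.unique (isPred_glue f.lt_succ_self)⟩
  · rintro ⟨hu, hpred⟩
    by_cases hf : u f (f + 1)
    · obtain ⟨i, hfi, hi⟩ := IsPred.exists_of_lt f.lt_succ_self hf
      obtain rfl := hpred i hi
      obtain ⟨⟨r, s⟩, ⟨hr, hs⟩, rfl⟩ :=
        (image_glue (p := p) haf i.lt_succ_self (.inr rfl)).superset ⟨hu, hi⟩
      obtain rfl := IsAdmissible.eq_bot hs (by omega)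
      exact ⟨(r, true), ⟨hr, trivial⟩, rfl⟩
    · have hlast (j) (hj : j < f + 1) : ¬ u j (f + 1) := fun h => by
        obtain ⟨i, -, hi⟩ := IsPred.exists_of_lt hj h
        exact hf (hpred i hi ▸ hi.2.1)
      refine ⟨(u, false), ⟨⟨fun x y hxy => ?_, hu.noncrossing, hu.line⟩, trivial⟩, rfl⟩
      have := hu.le_window hxy
      have := hlast x
      have := hlast y
      have := u.symm' hxy
      simp only [window_apply, Set.mem_Ico] at *
      grind

end Adjoin

section Recursion

theorem hasSymmetricChainDecomposition_bool :
    HasSymmetricChainDecomposition Bool.toNat Set.univ 1 := by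
  have hchain : IsSymmetricChain Bool.toNat 1 [false, true] :=
    ⟨by simp, by simp [RankStep], by simp⟩
  convert HasSymmetricChainDecomposition.of_isSymmetricChain hchain
  ext t
  cases t <;> simp

theorem hasSymmetricChainDecomposition_isPred (hai : a ≤ i) (hif : i < f)
    (hleft : HasSymmetricChainDecomposition rank {r | IsAdmissible p a (i + 1) r}
      (i + 1 - a - 1))
    (hright : HasSymmetricChainDecomposition rank {r | IsAdmissible p (i + 1) (f + 1) r}
      (f + 1 - (i + 1) - 1)) :
    HasSymmetricChainDecomposition rank
      {u | IsAdmissible p a (f + 2) u ∧ IsPred u (f + 1) i} (f + 2 - a - 1) := by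
  by_cases hp : p ≤ f + 1
  · have hie : i < f + 1 := by omega
    have himage := (hleft.prod hright).image (f := fun z => glue i (f + 1) z.1 z.2) (ρ' := rank)
      (c := 1) ?_ ?_ ?_
    · rw [image_glue hai hie (.inl hp)] at himage
      convert himage using 1
      omega
    · rintro ⟨r, s⟩ ⟨hr, hs⟩ ⟨r', s'⟩ ⟨hr', hs'⟩ h
      have hr : r ≤ window a (i + 1) := IsAdmissible.le_window hr
      have hr' : r' ≤ window a (i + 1) := IsAdmissible.le_window hr'
      have hs : s ≤ window (i + 1) (f + 1) := IsAdmissible.le_window hs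
      have hs' : s' ≤ window (i + 1) (f + 1) := IsAdmissible.le_window hs'
      have h : glue i (f + 1) r s = glue i (f + 1) r' s' := h
      have hrr' : r = r' := by
        rw [← glue_inf_window_left hie hr (s := s), h, glue_inf_window_left hie hr']
      have hss' : s = s' := by
        rw [← glue_inf_window_right hie hs (r := r), h, glue_inf_window_right hie hs']
      rw [hrr', hss']
    · rintro ⟨r, s⟩ - ⟨r', s'⟩ - ⟨hr, hs⟩
      exact glue_mono hie hr hs
    · rintro ⟨r, s⟩ ⟨hr, hs⟩
      exact rank_glue hie hr.le_window hs.le_window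
  · convert HasSymmetricChainDecomposition.empty
    refine Set.eq_empty_of_forall_notMem fun u ⟨hu, hi⟩ => ?_
    exact hi.2.2 f hif f.lt_succ_self
      (u.trans' (u.symm' (hu.line hif f.lt_succ_self (not_le.1 hp) hi.2.1)) hi.2.1)

theorem hasSymmetricChainDecomposition_adjoin (haf : a ≤ f)
    (h : HasSymmetricChainDecomposition rank {r | IsAdmissible p a (f + 1) r}
      (f + 1 - a - 1)) :
    HasSymmetricChainDecomposition rank
      {u | IsAdmissible p a (f + 2) u ∧ ∀ i, IsPred u (f + 1) i → i = f} (f + 2 - a - 1) := by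
  rw [← image_adjoin haf]
  convert (h.prod hasSymmetricChainDecomposition_bool).image (c := 0) injOn_adjoin monotoneOn_adjoin
    fun z hz => rank_adjoin hz.1.le_window z.2 using 1
  omega

theorem setOf_isAdmissible : {u | IsAdmissible p a (f + 2) u} =
    {u | IsAdmissible p a (f + 2) u ∧ ∀ i, IsPred u (f + 1) i → i = f} ∪
      ⋃ i : Set.Ico a f, {u | IsAdmissible p a (f + 2) u ∧ IsPred u (f + 1) i} := by
  ext u
  simp only [Set.mem_union, Set.mem_iUnion, Set.mem_ofPred_eq, Subtype.exists, exists_prop]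
  refine ⟨fun hu => ?_, by tauto⟩
  by_cases hlast : ∀ i, IsPred u (f + 1) i → i = f
  · exact .inl ⟨hu, hlast⟩
  · push Not at hlast
    obtain ⟨i, hi, hif⟩ := hlast
    have := (hu.le_window hi.2.1).resolve_left hi.1.ne
    have := hi.1
    exact .inr ⟨i, by grind, hu, hi⟩

theorem hasSymmetricChainDecomposition_isAdmissible (p a b : ℕ) :
    HasSymmetricChainDecomposition rank {r | IsAdmissible p a b r} (b - a - 1) := by
  induction b using Nat.strong_induction_on generalizing a with
  | _ b ih =>
    obtain hba | hab := le_or_gt b (a + 1)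
    · have hchain : IsSymmetricChain rank (b - a - 1) [⊥] :=
        ⟨by simp, by simp, by simp [rank_bot]; omega⟩
      convert HasSymmetricChainDecomposition.of_isSymmetricChain hchain using 1
      ext r
      simpa using ⟨fun hr => hr.eq_bot hba, fun hr => hr ▸ .bot⟩
    · obtain ⟨f, rfl⟩ : ∃ f, b = f + 2 := ⟨b - 2, by omega⟩
      have haf : a ≤ f := by omega
      rw [setOf_isAdmissible]
      refine .union ?_ (hasSymmetricChainDecomposition_adjoin haf (ih _ (by omega) a))
        (.iUnion (fun i j hij => Set.disjoint_left.2 fun u hu hu' =>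
          hij (Subtype.ext (hu.2.unique hu'.2))) fun i =>
            hasSymmetricChainDecomposition_isPred i.2.1 i.2.2
              (ih _ (by have := i.2.2; omega) a) (ih _ (by omega) (i + 1)))
      exact Set.disjoint_iUnion_right.2 fun i => Set.disjoint_left.2 fun u hu hu' =>
        i.2.2.ne (hu.2 i hu'.2)

end Recursion

section Rank

theorem exists_notMem_nonmax (hr : r ≤ window a b) (x : ℕ) : ∃ y ∉ nonmax r, r x y := by
  obtain ⟨y, hxy, hmax⟩ := BddAbove.exists_isGreatest_of_nonempty (S := {y | r x y})
    ⟨max x b, fun y hxy => by have := hr hxy; simp only [window_apply, Set.mem_Ico] at this; grind⟩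
    ⟨x, r.refl' x⟩
  exact ⟨y, fun ⟨z, hyz, h⟩ => hyz.not_ge (hmax (r.trans' hxy h)), hxy⟩

theorem eq_of_notMem_nonmax (hxy : r x y) (hx : x ∉ nonmax r) (hy : y ∉ nonmax r) : x = y := by
  obtain h | h | h := lt_trichotomy x y
  exacts [(hx ⟨y, h, hxy⟩).elim, h, (hy ⟨x, h, r.symm' hxy⟩).elim]

theorem rank_lt_rank (hs : s ≤ window a b) (hrs : r < s) : rank r < rank s := by
  refine Set.ncard_lt_ncard ⟨fun x ⟨y, hxy, h⟩ => ⟨y, hxy, hrs.le h⟩, fun hsub => ?_⟩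
    (finite_nonmax hs)
  refine hrs.not_ge fun x y hxy => ?_
  obtain ⟨x', hx', hxx'⟩ := exists_notMem_nonmax (hrs.le.trans hs) x
  obtain ⟨y', hy', hyy'⟩ := exists_notMem_nonmax (hrs.le.trans hs) y
  have hx'y' : s x' y' := s.trans' (s.symm' (hrs.le hxx')) (s.trans' hxy (hrs.le hyy'))
  obtain rfl := eq_of_notMem_nonmax hx'y' (mt (@hsub x') hx') (mt (@hsub y') hy')
  exact r.trans' hxx' (r.symm' hyy')

theorem rank_ker_inf_window {γ : Type*} [DecidableEq γ] (g : ℕ → γ) (N : ℕ) :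
    rank (Setoid.ker g ⊓ window 0 N) + #((range N).image g) = N := by
  set r := Setoid.ker g ⊓ window 0 N
  have hwindow : r ≤ window 0 N := inf_le_right
  have himage : g '' (Set.Ico 0 N \ nonmax r) = (range N).image g := by
    rw [coe_image, coe_range, ← Set.Ico_bot]
    refine (Set.image_mono Set.sdiff_subset).antisymm ?_
    rintro _ ⟨x, hxN, rfl⟩
    obtain ⟨y, hy, hxy⟩ := exists_notMem_nonmax hwindow x
    have hyN : y ∈ Set.Ico 0 N := hxy.2.elim (fun h => h ▸ hxN) And.right
    exact ⟨y, ⟨hyN, hy⟩, hxy.1.symm⟩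
  have hinj : Set.InjOn g (Set.Ico 0 N \ nonmax r) := fun x ⟨hxN, hx⟩ y ⟨hyN, hy⟩ hxy =>
    eq_of_notMem_nonmax (r := r) ⟨hxy, .inr ⟨hxN, hyN⟩⟩ hx hy
  have hcard := Set.ncard_sdiff_add_ncard_of_subset (nonmax_subset_Ico hwindow)
  rwa [← hinj.ncard_image, himage, Set.ncard_coe_finset, Set.ncard_Ico_nat, Nat.sub_zero,
    add_comm] at hcard

end Rank

end AdmissibleRelations

section Geometry

theorem disjoint_convexHull_of_le_of_lt {E : Type*} [AddCommGroup E] [Module ℝ E] {A B : Set E}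
    (f : E →ᵃ[ℝ] ℝ) (c : ℝ) (hA : ∀ x ∈ A, f x ≤ c) (hB : ∀ x ∈ B, c < f x) :
    Disjoint (convexHull ℝ A) (convexHull ℝ B) := by
  refine Disjoint.mono (convexHull_min hA ((convex_Iic c).affine_preimage f))
    (convexHull_min hB ((convex_Ioi c).affine_preimage f)) ?_
  exact Set.disjoint_left.2 fun x (hxA : f x ≤ c) (hxB : c < f x) => hxB.not_ge hxA

theorem convex_setOf_eq_or_lt {E : Type*} [AddCommGroup E] [Module ℝ E] (f : E →ᵃ[ℝ] ℝ) (a : E) :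
    Convex ℝ {x | x = a ∨ f a < f x} := by
  rw [convex_iff_openSegment_subset]
  rintro x hx y hy _ ⟨s, t, hs, ht, hst, rfl⟩
  have hle {z : E} (hz : z = a ∨ f a < f z) : f a ≤ f z := hz.elim (fun h => h ▸ le_rfl) le_of_lt
  have hlt (h : 0 < s * (f x - f a) + t * (f y - f a)) : f a < f (s • x + t • y) := by
    have hcombo : f (s • x + t • y) = s * f x + t * f y := Convex.combo_affine_apply hst
    rw [hcombo]
    linear_combination h - f a * hst
  obtain hxa | hxa := hx
  · obtain hya | hya := hy
    · exact .inl (by rw [hxa, hya, Convex.combo_self hst])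
    · exact .inr <| hlt <| add_pos_of_nonneg_of_pos
        (mul_nonneg hs.le (sub_nonneg.2 (hle (.inl hxa)))) (mul_pos ht (sub_pos.2 hya))
  · exact .inr <| hlt <| add_pos_of_pos_of_nonneg (mul_pos hs (sub_pos.2 hxa))
      (mul_nonneg ht.le (sub_nonneg.2 (hle hy)))

theorem disjoint_convexHull_of_eq_or_lt {E : Type*} [AddCommGroup E] [Module ℝ E] {A B : Set E}
    {a b : E} (f : E →ᵃ[ℝ] ℝ) (hab : a ≠ b) (hf : f a = f b) (hA : ∀ x ∈ A, x = a ∨ f a < f x)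
    (hB : ∀ x ∈ B, x = b ∨ f x < f b) : Disjoint (convexHull ℝ A) (convexHull ℝ B) := by
  refine Disjoint.mono (convexHull_min hA (convex_setOf_eq_or_lt f a))
    (convexHull_min (fun x hx => (hB x hx).imp_right neg_lt_neg) (convex_setOf_eq_or_lt (-f) b))
    (Set.disjoint_left.2 ?_)
  rintro x (rfl | hxa) (rfl | hxb)
  · exact hab rfl
  · exact (neg_lt_neg_iff.1 hxb).ne hf
  · exact hxa.ne hf
  · exact (hxa.trans (neg_lt_neg_iff.1 hxb)).ne hf

/-- Twice the signed area of the triangle `a b z`, as an affine function of `z`; it is positive if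
and only if `z` lies to the left of the line directed from `a` to `b`. -/
noncomputable def signedArea (a b : ℂ) : ℂ →ᵃ[ℝ] ℝ :=
  (b.re - a.re) • (Complex.imLm.toAffineMap - AffineMap.const ℝ ℂ a.im) -
    (b.im - a.im) • (Complex.reLm.toAffineMap - AffineMap.const ℝ ℂ a.re)

theorem signedArea_apply (a b z : ℂ) :
    signedArea a b z = (b.re - a.re) * (z.im - a.im) - (b.im - a.im) * (z.re - a.re) := by
  simp [signedArea]

theorem signedArea_rotate (a b c : ℂ) : signedArea b c a = signedArea a b c := by
  simp only [signedArea_apply]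
  ring

theorem signedArea_swap (a b c : ℂ) : signedArea a c b = -signedArea a b c := by
  simp only [signedArea_apply]
  ring

theorem signedArea_left (a b : ℂ) : signedArea a b a = 0 := by
  simp [signedArea_apply]

theorem signedArea_right (a b : ℂ) : signedArea a b b = 0 := by
  simp only [signedArea_apply]
  ring

theorem nonempty_segment_inter_segment {a b c d : ℂ} (habc : 0 ≤ signedArea a b c)
    (habd : 0 < signedArea a b d) (hacd : 0 < signedArea a c d) (hbcd : 0 < signedArea b c d) :
    (segment ℝ a c ∩ segment ℝ b d).Nonempty := by
  set w := signedArea b c d + signedArea a b d with hw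
  have hw' : w = signedArea a c d + signedArea a b c := by
    simp only [hw, signedArea_apply]
    ring
  have hw0 : 0 < w := by positivity
  refine ⟨(signedArea b c d / w) • a + (signedArea a b d / w) • c,
    ⟨_, _, by positivity, by positivity, by rw [← add_div, ← hw, div_self hw0.ne'], rfl⟩,
    ⟨signedArea a c d / w, signedArea a b c / w, by positivity, by positivity,
      by rw [← add_div, ← hw', div_self hw0.ne'], ?_⟩⟩
  apply Complex.ext <;>
    simp only [Complex.add_re, Complex.add_im, Complex.smul_re, Complex.smul_im, smul_eq_mul,
      div_mul_eq_mul_div, ← add_div, signedArea_apply] <;>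
    ring

/-- A configuration of points numbered from `0` to `N - 1`: those numbered below `p` lie on the real
axis, from left to right, and the remaining ones complete them to a convex polygon, traversed
counterclockwise, without collinear triples except on the axis. -/
structure IsSegmentArc (p N : ℕ) (P : ℕ → ℂ) : Prop where
  two_le : 2 ≤ p
  im_eq_zero : ∀ {i}, i < p → (P i).im = 0
  re_lt_re : ∀ {i j}, i < j → j < p → (P i).re < (P j).re
  area_pos : ∀ {i j k}, i < j → j < k → k < N → p ≤ k → 0 < signedArea (P i) (P j) (P k)

namespace IsSegmentArc

variable {p N i j k l : ℕ} {P : ℕ → ℂ}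

theorem area_nonneg (hP : IsSegmentArc p N P) (hij : i < j) (hjk : j < k) (hkN : k < N) :
    0 ≤ signedArea (P i) (P j) (P k) := by
  obtain hkp | hpk := lt_or_ge k p
  · simp [signedArea_apply, hP.im_eq_zero hkp, hP.im_eq_zero (hjk.trans hkp),
      hP.im_eq_zero (hij.trans (hjk.trans hkp))]
  · exact (hP.area_pos hij hjk hkN hpk).le

theorem injOn (hP : IsSegmentArc p N P) : Set.InjOn P (Set.Iio N) := by
  suffices hne : ∀ {i j}, i < j → j < N → P i ≠ P j by
    intro i hi j hj hij
    by_contra h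
    obtain h | h := lt_or_gt_of_ne h
    exacts [hne h hj hij, hne h hi hij.symm]
  intro i j hij hjN heq
  have := hP.two_le
  obtain hjp | hpj := lt_or_ge j p
  · exact (hP.re_lt_re hij hjp).ne (congrArg Complex.re heq)
  · obtain rfl | hi := i.eq_zero_or_pos
    · have h := hP.area_pos zero_lt_one (by omega) hjN hpj
      rw [heq, signedArea_left] at h
      exact h.false
    · have h := hP.area_pos hi hij hjN hpj
      rw [heq, signedArea_right] at h
      exact h.false

theorem mem_segment (hP : IsSegmentArc p N P) (hij : i < j) (hjk : j < k) (hkp : k < p) :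
    P j ∈ segment ℝ (P i) (P k) := by
  have hij' := hP.re_lt_re hij (hjk.trans hkp)
  have hjk' := hP.re_lt_re hjk hkp
  have hreal {x : ℕ} (hx : x < p) : P x = (P x).re :=
    Complex.ext rfl (by simp [hP.im_eq_zero hx])
  rw [hreal (hij.trans (hjk.trans hkp)), hreal (hjk.trans hkp), hreal hkp]
  have hre : (P j).re ∈ segment ℝ (P i).re (P k).re := by
    rw [segment_eq_Icc (hij'.trans hjk').le]
    exact ⟨hij'.le, hjk'.le⟩
  exact ((mem_segment_iff_wbtw.1 hre).map Complex.ofRealCLM.toLinearMap.toAffineMap).mem_segment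

theorem nonempty_segment_inter_segment (hP : IsSegmentArc p N P) (hij : i < j) (hjk : j < k)
    (hkl : k < l) (hlN : l < N) : (segment ℝ (P i) (P k) ∩ segment ℝ (P j) (P l)).Nonempty := by
  obtain hlp | hpl := lt_or_ge l p
  · exact ⟨P j, hP.mem_segment hij hjk (hkl.trans hlp), left_mem_segment ℝ _ _⟩
  · exact SemicircleNC.nonempty_segment_inter_segment (hP.area_nonneg hij hjk (hkl.trans hlN))
      (hP.area_pos hij (hjk.trans hkl) hlN hpl) (hP.area_pos (hij.trans hjk) hkl hlN hpl)
      (hP.area_pos hjk hkl hlN hpl)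

theorem disjoint_convexHull_of_subset_Ioo (hP : IsSegmentArc p N P) {A B : Set ℕ} (hkN : k < N)
    (hpk : p ≤ k) (hAN : A ⊆ Set.Iio N) (hA : A ⊆ Set.Iic i ∪ Set.Ici k) (hB : B ⊆ Set.Ioo i k) :
    Disjoint (convexHull ℝ (P '' A)) (convexHull ℝ (P '' B)) := by
  obtain rfl | ⟨j, hj⟩ := B.eq_empty_or_nonempty
  · simp
  have hik : i < k := (hB hj).1.trans (hB hj).2
  refine disjoint_convexHull_of_le_of_lt (signedArea (P k) (P i)) 0 ?_ ?_
  · rintro _ ⟨x, hx, rfl⟩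
    rw [signedArea_swap, neg_nonpos]
    obtain (hxi : x ≤ i) | (hkx : k ≤ x) := hA hx
    · obtain rfl | hxi := hxi.eq_or_lt
      · rw [signedArea_right]
      · rw [← signedArea_rotate]
        exact hP.area_nonneg hxi hik hkN
    · obtain rfl | hkx := hkx.eq_or_lt
      · rw [← signedArea_rotate, signedArea_left]
      · rw [signedArea_rotate]
        exact hP.area_nonneg hik hkx (hAN hx)
  · rintro _ ⟨x, hx, rfl⟩
    rw [← signedArea_rotate]
    exact hP.area_pos (hB hx).1 (hB hx).2 hkN hpk

/-- If the last point `b` of `B` is off the axis, the line through the last point `a` of `A` and `b`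
separates the two hulls weakly, touching them only in `a` and `b`. -/
theorem disjoint_convexHull_of_lt (hP : IsSegmentArc p N P) {A B : Set ℕ} (hB : B ⊆ Set.Iio N)
    (hAB : ∀ x ∈ A, ∀ y ∈ B, x < y) :
    Disjoint (convexHull ℝ (P '' A)) (convexHull ℝ (P '' B)) := by
  obtain rfl | hA0 := A.eq_empty_or_nonempty
  · simp
  obtain rfl | hB0 := B.eq_empty_or_nonempty
  · simp
  obtain ⟨b, hb, hbmax⟩ := BddAbove.exists_isGreatest_of_nonempty ⟨N, fun x hx => (hB hx).le⟩ hB0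
  obtain ⟨a, ha, hamax⟩ :=
    BddAbove.exists_isGreatest_of_nonempty ⟨b, fun x hx => (hAB x hx b hb).le⟩ hA0
  have hab := hAB a ha b hb
  obtain hbp | hpb := lt_or_ge b p
  · refine disjoint_convexHull_of_le_of_lt Complex.reLm.toAffineMap (P a).re ?_ ?_
    · rintro _ ⟨x, hx, rfl⟩
      obtain rfl | hxa := (hamax hx).eq_or_lt
      exacts [le_rfl, (hP.re_lt_re hxa (hab.trans hbp)).le]
    · rintro _ ⟨x, hx, rfl⟩
      exact hP.re_lt_re (hAB a ha x hx) ((hbmax hx).trans_lt hbp)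
  · refine disjoint_convexHull_of_eq_or_lt (a := P a) (b := P b) (signedArea (P a) (P b))
      (hP.injOn.ne (hab.trans (hB hb)) (hB hb) hab.ne) ?_ ?_ ?_
    · rw [signedArea_left, signedArea_right]
    · rintro _ ⟨x, hx, rfl⟩
      refine (hamax hx).eq_or_lt.imp (congrArg P) fun hxa => ?_
      rw [signedArea_left, signedArea_rotate]
      exact hP.area_pos hxa hab (hB hb) hpb
    · rintro _ ⟨x, hx, rfl⟩
      refine (hbmax hx).eq_or_lt.imp (congrArg P) fun hxb => ?_
      rw [signedArea_right, signedArea_swap, neg_lt_zero]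
      exact hP.area_pos (hAB a ha x hx) hxb (hB hb) hpb

end IsSegmentArc

end Geometry

section AdmissibleClasses

variable {p N i x y : ℕ} {P : ℕ → ℂ} {r : Setoid ℕ}

theorem IsAdmissible.lt_or_exists_subset_Ioo (hr : IsAdmissible p 0 N r) (hxy : x < y)
    (hy : y ∈ lowerBounds {z | r y z}) (hrxy : ¬ r x y) :
    (∀ z ∈ {z | r x z}, ∀ w ∈ {w | r y w}, z < w) ∨ ∃ i k, k < N ∧ p ≤ k ∧
      {z | r x z} ⊆ Set.Iic i ∪ Set.Ici k ∧ {w | r y w} ⊆ Set.Ioo i k := by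
  have hne {z w : ℕ} (hz : r x z) (hw : r y w) : z ≠ w := by
    rintro rfl
    exact hrxy (r.trans' hz (r.symm' hw))
  by_cases hlt : ∀ z, r x z → z < y
  · exact .inl fun z hz w hw => (hlt z hz).trans_le (hy hw)
  right
  push Not at hlt
  obtain ⟨z₀, hz₀, hyz₀⟩ := hlt
  obtain ⟨i, ⟨hxi, hiy⟩, hi⟩ := BddAbove.exists_isGreatest_of_nonempty (S := {z | r x z ∧ z < y})
    ⟨y, fun z hz => hz.2.le⟩ ⟨x, r.refl' x, hxy⟩
  obtain ⟨⟨hxk, hyk⟩, hk⟩ := isLeast_csInf (s := {z | r x z ∧ y < z})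
    ⟨z₀, hz₀, hyz₀.lt_of_ne' (hne hz₀ (r.refl' y))⟩
  set k := sInf {z | r x z ∧ y < z}
  have hik : r i k := r.trans' (r.symm' hxi) hxk
  have hiy' : ¬ r i y := fun h => hrxy (r.trans' hxi h)
  refine ⟨i, k, ?_, not_lt.1 fun hkp => hiy' (hr.line hiy hyk hkp hik), fun z hz => ?_,
    fun w hw => ⟨hiy.trans_le (hy hw), not_le.1 fun hkw => hiy' ?_⟩⟩
  · exact ((hr.le_window hik).resolve_left (hiy.trans hyk).ne).2.2
  · obtain h | h := lt_or_gt_of_ne (hne hz (r.refl' y))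
    exacts [.inl (hi ⟨hz, h⟩), .inr (hk ⟨hz, h⟩)]
  · exact hr.noncrossing hiy hyk (hkw.lt_of_ne (hne hxk hw)) hik hw

theorem setOf_rel_congr (hxy : r x y) : {z | r x z} = {z | r y z} :=
  Set.ext fun _ => ⟨r.trans' (r.symm' hxy), r.trans' hxy⟩

theorem IsSegmentArc.disjoint_convexHull_classes (hP : IsSegmentArc p N P)
    (hr : IsAdmissible p 0 N r) (hx : x < N) (hy : y < N) (hxy : ¬ r x y) :
    Disjoint (convexHull ℝ (P '' {z | r x z})) (convexHull ℝ (P '' {z | r y z})) := by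
  have hclass {x : ℕ} (hx : x < N) : {z | r x z} ⊆ Set.Iio N := fun z hz => by
    obtain rfl | h := hr.le_window hz
    exacts [hx, h.2.2]
  obtain ⟨a, ha, hamin⟩ : ∃ a, IsLeast {z | r x z} a := ⟨_, isLeast_csInf ⟨x, r.refl' x⟩⟩
  obtain ⟨b, hb, hbmin⟩ : ∃ b, IsLeast {z | r y z} b := ⟨_, isLeast_csInf ⟨y, r.refl' y⟩⟩
  replace hx := hclass hx ha
  replace hy := hclass hy hb
  have hab : ¬ r a b := fun h => hxy (r.trans' ha (r.trans' h (r.symm' hb)))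
  rw [setOf_rel_congr ha] at hamin ⊢
  rw [setOf_rel_congr hb] at hbmin ⊢
  clear ha hb
  wlog hlt : a < b generalizing a b
  · exact (this b hbmin a hamin hy hx (fun h => hab (r.symm' h))
      (lt_of_le_of_ne (not_lt.1 hlt) fun h => hab (h ▸ r.refl' b))).symm
  obtain h | ⟨i, k, hkN, hpk, hA, hB⟩ := hr.lt_or_exists_subset_Ioo hlt hbmin hab
  · exact hP.disjoint_convexHull_of_lt (hclass hy) h
  · exact hP.disjoint_convexHull_of_subset_Ioo hkN hpk (hclass hx) hA hB

end AdmissibleClasses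

section IndexSetoid

variable {α : Type*} [DecidableEq α] {N x y : ℕ} {P : ℕ → α}

/-- The partition of the numbers below `N` induced by a partition of the points `P k`. -/
def indexSetoid (π : Finpartition ((range N).image P)) : Setoid ℕ :=
  Setoid.ker (fun k => π.part (P k)) ⊓ window 0 N

theorem apply_mem_image_range (P : ℕ → α) (hx : x < N) : P x ∈ (range N).image P :=
  mem_image_of_mem P (mem_range.2 hx)

theorem indexSetoid_le_window (π : Finpartition ((range N).image P)) :
    indexSetoid π ≤ window 0 N :=
  inf_le_right

theorem indexSetoid_apply (π : Finpartition ((range N).image P)) (hx : x < N) (hy : y < N) :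
    indexSetoid π x y ↔ P y ∈ π.part (P x) := by
  rw [π.mem_part_iff_part_eq_part (apply_mem_image_range P hy) (apply_mem_image_range P hx)]
  exact (and_iff_left (.inr ⟨⟨zero_le, hx⟩, zero_le, hy⟩)).trans eq_comm

theorem indexSetoid_le_indexSetoid {π π' : Finpartition ((range N).image P)} :
    indexSetoid π ≤ indexSetoid π' ↔ π ≤ π' := by
  refine ⟨fun h B hB => ?_, fun h x y hxy => ?_⟩
  · obtain ⟨z, hz⟩ := π.nonempty_of_mem_parts hB
    obtain ⟨x, hx, rfl⟩ := mem_image.1 (π.le hB hz)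
    refine ⟨_, π'.part_mem.2 (π.le hB hz), fun w hw => ?_⟩
    obtain ⟨y, hy, rfl⟩ := mem_image.1 (π.le hB hw)
    rw [mem_range] at hx hy
    rw [← indexSetoid_apply π' hx hy]
    exact h ((indexSetoid_apply π hx hy).2 (π.part_eq_of_mem hB hz ▸ hw))
  · obtain rfl | ⟨hx, hy⟩ := indexSetoid_le_window π hxy
    · exact Setoid.refl' _ x
    · rw [indexSetoid_apply π hx.2 hy.2] at hxy
      rw [indexSetoid_apply π' hx.2 hy.2]
      obtain ⟨C, hC, hle⟩ := h (π.part_mem.2 (apply_mem_image_range P hx.2))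
      have hxC := hle (π.mem_part_self.2 (apply_mem_image_range P hx.2))
      rw [π'.part_eq_of_mem hC hxC]
      exact hle hxy

theorem rank_indexSetoid (π : Finpartition ((range N).image P)) :
    rank (indexSetoid π) + #π.parts = N := by
  have hparts : (range N).image (fun k => π.part (P k)) = π.parts := by
    rw [← coe_inj, ← (show image π.part _ = image (fun k => π.part (P k)) _ from image_image),
      coe_image]
    exact Set.Subset.antisymm (Set.image_subset_iff.2 fun z hz => π.part_mem.2 hz) π.part_surjOn
  rw [← hparts]
  exact rank_ker_inf_window _ N

theorem exists_indexSetoid_eq {r : Setoid ℕ} (hP : Set.InjOn P (Set.Iio N)) (hr : r ≤ window 0 N) :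
    ∃ π : Finpartition ((range N).image P), indexSetoid π = r := by
  classical
  refine ⟨.ofSetSetoid (r.comap (Function.invFunOn P (Set.Iio N))) _, Setoid.ext fun x y => ?_⟩
  by_cases hxy : x < N ∧ y < N
  · rw [indexSetoid_apply _ hxy.1 hxy.2, Finpartition.mem_part_ofSetSetoid_iff_rel]
    simp [apply_mem_image_range P hxy.1, apply_mem_image_range P hxy.2, Setoid.comap_rel,
      hP.leftInvOn_invFunOn hxy.1, hP.leftInvOn_invFunOn hxy.2]
  · have h {s : Setoid ℕ} (hs : s ≤ window 0 N) : s x y ↔ x = y :=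
      ⟨fun h => (hs h).resolve_right fun h' => hxy ⟨h'.1.2, h'.2.2⟩, fun h => h ▸ s.refl' x⟩
    rw [h hr, h (indexSetoid_le_window _)]

end IndexSetoid

section NoncrossingPartitions

variable {p N i j k l x : ℕ} {P : ℕ → ℂ}

theorem coe_part_eq_image (π : Finpartition ((range N).image P)) (hx : x < N) :
    (π.part (P x) : Set ℂ) = P '' {z | indexSetoid π x z} := by
  ext w
  constructor
  · intro hw
    obtain ⟨y, hy, rfl⟩ := mem_image.1 (π.part_subset _ hw)
    exact ⟨y, (indexSetoid_apply π hx (mem_range.1 hy)).2 hw, rfl⟩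
  · rintro ⟨y, hxy, rfl⟩
    obtain rfl | h := indexSetoid_le_window π hxy
    · exact π.mem_part_self.2 (apply_mem_image_range P hx)
    · exact (indexSetoid_apply π hx h.2.2).1 hxy

theorem indexSetoid_of_nonempty_segment_inter_segment {π : NC ((range N).image P)}
    (hi : i < N) (hj : j < N) (hik : indexSetoid π.1 i k) (hjl : indexSetoid π.1 j l)
    (h : (segment ℝ (P i) (P k) ∩ segment ℝ (P j) (P l)).Nonempty) : indexSetoid π.1 i j := by
  by_contra hij
  have hsub {x y : ℕ} (hx : x < N) (hxy : indexSetoid π.1 x y) :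
      segment ℝ (P x) (P y) ⊆ convexHull ℝ (π.1.part (P x) : Set ℂ) := by
    rw [coe_part_eq_image π.1 hx]
    exact segment_subset_convexHull ⟨x, (indexSetoid π.1).refl' x, rfl⟩ ⟨y, hxy, rfl⟩
  have hne : π.1.part (P i) ≠ π.1.part (P j) := fun h =>
    hij ((indexSetoid_apply π.1 hi hj).2 (h ▸ π.1.mem_part_self.2 (apply_mem_image_range P hj)))
  have hdisj := π.2 (π.1.part_mem.2 (apply_mem_image_range P hi))
    (π.1.part_mem.2 (apply_mem_image_range P hj)) hne
  exact Set.not_disjoint_iff_nonempty_inter.2 h (hdisj.mono (hsub hi hik) (hsub hj hjl))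

theorem IsSegmentArc.isAdmissible_indexSetoid (hP : IsSegmentArc p N P)
    (π : NC ((range N).image P)) : IsAdmissible p 0 N (indexSetoid π.1) where
  le_window := indexSetoid_le_window π.1
  noncrossing {i j k l} hij hjk hkl hik hjl := by
    have hl := ((indexSetoid_le_window π.1 hjl).resolve_left (by omega)).2.2
    exact indexSetoid_of_nonempty_segment_inter_segment (by omega) (by omega) hik hjl
      (hP.nonempty_segment_inter_segment hij hjk hkl hl)
  line {i j k} hij hjk hkp hik := by
    have hk := ((indexSetoid_le_window π.1 hik).resolve_left (by omega)).2.2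
    exact indexSetoid_of_nonempty_segment_inter_segment (by omega) (by omega) hik
      (Setoid.refl' _ j) ⟨P j, hP.mem_segment hij hjk hkp, left_mem_segment ℝ _ _⟩

theorem IsSegmentArc.isNoncrossing (hP : IsSegmentArc p N P)
    {π : Finpartition ((range N).image P)} (hπ : IsAdmissible p 0 N (indexSetoid π)) :
    IsNoncrossing π := by
  have hpart {B} (hB : B ∈ π.parts) : ∃ x < N, π.part (P x) = B := by
    obtain ⟨z, hz, rfl⟩ := π.part_surjOn hB
    obtain ⟨x, hx, rfl⟩ := mem_image.1 hz
    exact ⟨x, mem_range.1 hx, rfl⟩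
  intro B hB C hC hBC
  obtain ⟨x, hx, rfl⟩ := hpart hB
  obtain ⟨y, hy, rfl⟩ := hpart hC
  rw [coe_part_eq_image π hx, coe_part_eq_image π hy]
  refine hP.disjoint_convexHull_classes hπ hx hy fun hxy => hBC ?_
  rw [indexSetoid_apply π hx hy] at hxy
  exact (π.part_eq_of_mem hB hxy).symm

/-- Noncrossing partitions as equivalence relations on the numbers of the points. -/
noncomputable def indexEmbedding (N : ℕ) (P : ℕ → ℂ) : NC ((range N).image P) ↪o Setoid ℕ :=
  OrderEmbedding.ofMapLEIff (fun π => indexSetoid π.1) fun _ _ => indexSetoid_le_indexSetoid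

theorem IsSegmentArc.range_indexEmbedding (hP : IsSegmentArc p N P) :
    Set.range (indexEmbedding N P) = {r | IsAdmissible p 0 N r} := by
  ext r
  constructor
  · rintro ⟨π, rfl⟩
    exact hP.isAdmissible_indexSetoid π
  · intro hr
    obtain ⟨π, rfl⟩ := exists_indexSetoid_eq hP.injOn hr.le_window
    exact ⟨⟨π, hP.isNoncrossing hr⟩, rfl⟩

theorem strictMono_rank_indexEmbedding (N : ℕ) (P : ℕ → ℂ) :
    StrictMono (rank ∘ indexEmbedding N P) := fun _ μ h =>
  rank_lt_rank (indexSetoid_le_window μ.1) ((indexEmbedding N P).lt_iff_lt.2 h)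

theorem sub_card_parts (π : NC ((range N).image P)) :
    N - π.parts.card = rank (indexEmbedding N P π) :=
  Nat.sub_eq_of_eq_add (rank_indexSetoid π.1).symm

end NoncrossingPartitions

section SemicircularConfiguration

variable {m n i j k : ℕ}

/-- The points of `S_{m,n}` numbered counterclockwise, starting from `-1`. -/
noncomputable def point (m n k : ℕ) : ℂ := if k < m + 2 then Sx m k else Sy n (k - (m + 1))

theorem point_of_lt (hk : k < m + 2) : point m n k = Sx m k :=
  if_pos hk

theorem point_of_le (hk : m + 2 ≤ k) : point m n k = Sy n (k - (m + 1)) :=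
  if_neg hk.not_gt

theorem Sconfig_eq_image_point (m n : ℕ) :
    Sconfig m n = (range (m + n + 2)).image (point m n) := by
  ext z
  simp only [Sconfig, mem_union, mem_image, mem_range, mem_Icc]
  constructor
  · rintro (⟨k, hk, rfl⟩ | ⟨j, hj, rfl⟩)
    · exact ⟨k, by omega, point_of_lt hk⟩
    · exact ⟨j + (m + 1), by omega, by rw [point_of_le (by omega), Nat.add_sub_cancel]⟩
  · rintro ⟨k, hk, rfl⟩
    obtain h | h := lt_or_ge k (m + 2)
    · exact .inl ⟨k, h, (point_of_lt h).symm⟩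
    · exact .inr ⟨k - (m + 1), by omega, (point_of_le h).symm⟩

theorem Sx_eq_ofReal (m k : ℕ) : Sx m k = ((-1 + 2 * (k / (m + 1)) : ℝ) : ℂ) := by
  rw [Sx]
  push_cast
  ring

theorem Sx_im (m k : ℕ) : (Sx m k).im = 0 := by
  rw [Sx_eq_ofReal, Complex.ofReal_im]

theorem Sx_re_lt_Sx_re (m : ℕ) (hij : i < j) : (Sx m i).re < (Sx m j).re := by
  simp only [Sx_eq_ofReal, Complex.ofReal_re]
  gcongr

/-- The argument of the point `y_j`. -/
noncomputable def angle (n j : ℕ) : ℝ := Real.pi * j / (n + 1)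

theorem Sy_eq_exp_angle (n j : ℕ) : Sy n j = Complex.exp (angle n j * Complex.I) := by
  simp [Sy, angle]

theorem angle_pos (hj : 0 < j) : 0 < angle n j := by
  have := Real.pi_pos
  rw [angle]
  positivity

theorem angle_lt_angle (n : ℕ) (hij : i < j) : angle n i < angle n j := by
  have := Real.pi_pos
  rw [angle, angle]
  gcongr

theorem angle_lt_pi (hj : j ≤ n) : angle n j < Real.pi := by
  rw [angle, mul_div_assoc]
  refine mul_lt_of_lt_one_right Real.pi_pos ?_
  rw [div_lt_one (by positivity)]
  exact_mod_cast Nat.lt_succ_of_le hj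

theorem sin_two_mul_add_sin_two_mul_sub (u v : ℝ) :
    Real.sin (2 * u) + Real.sin (2 * v) - Real.sin (2 * (u + v)) =
      4 * Real.sin u * Real.sin v * Real.sin (u + v) := by
  rw [mul_add, Real.sin_add, Real.sin_add, Real.sin_two_mul, Real.sin_two_mul, Real.cos_two_mul,
    Real.cos_two_mul, Real.cos_sq', Real.cos_sq']
  ring

theorem signedArea_exp (α β γ : ℝ) :
    signedArea (Complex.exp (α * Complex.I)) (Complex.exp (β * Complex.I))
        (Complex.exp (γ * Complex.I)) =
      4 * Real.sin ((β - α) / 2) * Real.sin ((γ - β) / 2) * Real.sin ((γ - α) / 2) := by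
  have hsin_sum : signedArea (Complex.exp (α * Complex.I)) (Complex.exp (β * Complex.I))
      (Complex.exp (γ * Complex.I)) =
        Real.sin (β - α) + Real.sin (γ - β) - Real.sin (γ - α) := by
    simp only [signedArea_apply, Complex.exp_ofReal_mul_I_re, Complex.exp_ofReal_mul_I_im,
      Real.sin_sub]
    ring
  have hangle : (γ - α) / 2 = (β - α) / 2 + (γ - β) / 2 := by ring
  rw [hsin_sum, hangle, ← sin_two_mul_add_sin_two_mul_sub]
  ring_nf

theorem signedArea_exp_pos {α β γ : ℝ} (hαβ : α < β) (hβγ : β < γ) (hγα : γ < α + 2 * Real.pi) :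
    0 < signedArea (Complex.exp (α * Complex.I)) (Complex.exp (β * Complex.I))
      (Complex.exp (γ * Complex.I)) := by
  have hsin {x : ℝ} (h0 : 0 < x) (hx : x < 2 * Real.pi) : 0 < Real.sin (x / 2) :=
    Real.sin_pos_of_pos_of_lt_pi (by linarith) (by linarith)
  rw [signedArea_exp]
  have := hsin (sub_pos.2 hαβ) (by linarith)
  have := hsin (sub_pos.2 hβγ) (by linarith)
  have := hsin (sub_pos.2 (hαβ.trans hβγ)) (by linarith)
  positivity

theorem Sx_mem_segment (hk : k < m + 2) :
    Sx m k ∈ segment ℝ (Complex.exp ((0 : ℝ) * Complex.I)) (Complex.exp (Real.pi * Complex.I)) := by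
  have hk : (k : ℝ) / (m + 1) ≤ 1 :=
    div_le_one_of_le₀ (by exact_mod_cast Nat.le_of_lt_succ hk) (by positivity)
  refine ⟨k / (m + 1), 1 - k / (m + 1), by positivity, sub_nonneg.2 hk, by ring, ?_⟩
  rw [Sx_eq_ofReal, Complex.exp_pi_mul_I]
  simp only [Complex.ofReal_zero, zero_mul, Complex.exp_zero, Complex.real_smul]
  push_cast
  ring

theorem signedArea_Sx_Sx_Sy_pos (hij : i < j) (hk : 0 < k) (hkn : k ≤ n) :
    0 < signedArea (Sx m i) (Sx m j) (Sy n k) := by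
  have hre : (Sx m i).re < (Sx m j).re := Sx_re_lt_Sx_re m hij
  have him : 0 < (Sy n k).im := by
    rw [Sy_eq_exp_angle, Complex.exp_ofReal_mul_I_im]
    exact Real.sin_pos_of_pos_of_lt_pi (angle_pos hk) (angle_lt_pi hkn)
  simpa [signedArea_apply, Sx_im] using mul_pos (sub_pos.2 hre) him

theorem signedArea_Sx_Sy_Sy_pos (hi : i < m + 2) (hj : 0 < j) (hjk : j < k) (hkn : k ≤ n) :
    0 < signedArea (Sx m i) (Sy n j) (Sy n k) := by
  have hpos : 0 < angle n j := angle_pos hj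
  have hlt : angle n j < angle n k := angle_lt_angle n hjk
  have hpi : angle n k < Real.pi := angle_lt_pi hkn
  have hconvex : Convex ℝ {z | 0 < signedArea (Sy n j) (Sy n k) z} :=
    (convex_Ioi (0 : ℝ)).affine_preimage _
  rw [← signedArea_rotate]
  refine hconvex.segment_subset ?_ ?_ (Sx_mem_segment hi) <;>
    rw [Set.mem_ofPred_eq, Sy_eq_exp_angle, Sy_eq_exp_angle]
  · rw [signedArea_rotate]
    exact signedArea_exp_pos hpos hlt (by linarith)
  · exact signedArea_exp_pos hlt hpi (by linarith)

theorem isSegmentArc_point (m n : ℕ) : IsSegmentArc (m + 2) (m + n + 2) (point m n) where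
  two_le := by omega
  im_eq_zero hk := by rw [point_of_lt hk, Sx_im]
  re_lt_re hij hj := by
    rw [point_of_lt (hij.trans hj), point_of_lt hj]
    exact Sx_re_lt_Sx_re m hij
  area_pos {i j k} hij hjk hk hmk := by
    rw [point_of_le hmk]
    obtain hj | hj := lt_or_ge j (m + 2)
    · rw [point_of_lt (hij.trans hj), point_of_lt hj]
      exact signedArea_Sx_Sx_Sy_pos hij (by omega) (by omega)
    rw [point_of_le hj]
    obtain hi | hi := lt_or_ge i (m + 2)
    · rw [point_of_lt hi]
      exact signedArea_Sx_Sy_Sy_pos hi (by omega) (by omega) (by omega)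
    · rw [point_of_le hi, Sy_eq_exp_angle, Sy_eq_exp_angle, Sy_eq_exp_angle]
      have hγ := angle_lt_pi (n := n) (j := k - (m + 1)) (by omega)
      have hα := angle_pos (n := n) (j := i - (m + 1)) (by omega)
      exact signedArea_exp_pos (angle_lt_angle n (by omega)) (angle_lt_angle n (by omega))
        (by linarith [Real.pi_pos])

end SemicircularConfiguration

end SemicircleNC

open SemicircleNC in
theorem nc_S_symmetric_chain_decomposition_general {p N : ℕ} {P : ℕ → ℂ}
    (hP : IsSegmentArc p N P) :
    ∃ chains : Set (List (NC ((range N).image P))),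
      [] ∉ chains ∧
      (∀ x : NC ((range N).image P), ∃! l, l ∈ chains ∧ x ∈ l) ∧
      (∀ l ∈ chains, l.IsChain (· ⋖ ·)) ∧
      ∀ l ∈ chains, ∀ h : l ≠ [],
        (N - (l.head h).parts.card) + (N - (l.getLast h).parts.card) = N - 1 := by
  have hadmissible := hasSymmetricChainDecomposition_isAdmissible p 0 N
  rw [← hP.range_indexEmbedding] at hadmissible
  simpa only [sub_card_parts, Function.comp_apply, Nat.sub_zero] using
    hadmissible.comap_orderEmbedding.exists_saturated_chains (strictMono_rank_indexEmbedding N P)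

/-- For all `m, n ≥ 0`, `NC(S_{m,n})` admits a symmetric chain decomposition: it can be
partitioned into saturated chains, each satisfying
`ρ(min C) + ρ(max C) = (m + n + 2) - 1`, where `ρ(π) = (m + n + 2) - #blocks(π)`. -/
theorem nc_S_symmetric_chain_decomposition (m n : ℕ) :
    ∃ chains : Set (List (NC (Sconfig m n))),
      [] ∉ chains ∧
      (∀ x : NC (Sconfig m n), ∃! l, l ∈ chains ∧ x ∈ l) ∧
      (∀ l ∈ chains, List.Chain' (· ⋖ ·) l) ∧
      ∀ l ∈ chains, ∀ h : l ≠ [],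
        ((m + n + 2) - (l.head h).parts.card) +
            ((m + n + 2) - (l.getLast h).parts.card) = (m + n + 2) - 1 := by
  rw [SemicircleNC.Sconfig_eq_image_point]
  exact nc_S_symmetric_chain_decomposition_general (SemicircleNC.isSegmentArc_point m n)
end

section
/- Let s_{m,n} denote the cardinality of NC(S_{m,n}) and let C_j denote the j-th Catalan number. For all m ≥ 1 and n ≥ 1, s_{m,n} = 2·s_{m−1,n} + Σ_{k=1}^{n} s_{m−1,k−1}·C_{n−k+1}. -/
open Finset

/-!
List the points counterclockwise from `-1`: first `x_0, …, x_{m+1}`, then `y_1, …, y_n`. They lie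
in convex position except for the collinear `x_k`, so a partition is noncrossing exactly when its
blocks, read on indices, have no crossing `a < b < c < d` and no block joins two of the `x_k`
without containing the points between them.

Consider the successor of `x_0` in its block. If there is none, removing `x_0` leaves a noncrossing
partition of the remaining `m + n + 1` points, which are arranged as `S_{m-1,n}`. If the successor
is `x_1`, the two points can be merged, which gives the same count. Otherwise the successor is a
circle point `y_k`, and the chord `x_0 y_k` separates the points strictly between them, which are
arranged as `S_{m-1,k-1}`, from the `n - k + 1` points `y_k, …, y_n`, which are in convex position
and have `C_{n-k+1}` noncrossing partitions.
-/

section EquivalenceRelations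

variable {α : Type*}

/-- The equivalence relation on `α` whose only possibly nontrivial class is `A`. Thus
`r ≤ collapse A` says that every element outside `A` is alone in its `r`-class. -/
def collapse (A : Set α) : Setoid α where
  r x y := x = y ∨ x ∈ A ∧ y ∈ A
  iseqv :=
    ⟨fun _ => .inl rfl, by grind, by grind⟩

theorem inf_collapse_rel_iff {A : Set α} {r : Setoid α} {x y : α} :
    (r ⊓ collapse A) x y ↔ r x y ∧ (x = y ∨ x ∈ A ∧ y ∈ A) :=
  Iff.rfl

theorem rel_iff_eq_of_notMem {A : Set α} {r : Setoid α} (hr : r ≤ collapse A) {x y : α}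
    (hx : x ∉ A) : r x y ↔ x = y := by
  refine ⟨fun hxy => (hr hxy).resolve_right fun h => hx h.1, ?_⟩
  rintro rfl
  exact r.refl' x

theorem finite_setOf_le_collapse {A : Set α} (hA : A.Finite) :
    {r : Setoid α | r ≤ collapse A}.Finite := by
  refine Set.Finite.of_injOn (f := fun r => {p ∈ A ×ˢ A | r p.1 p.2})
    (t := (A ×ˢ A).powerset) (fun _ _ => Set.sep_subset _ _) ?_ (hA.prod hA).finite_subsets
  have hle : ∀ {r s : Setoid α}, r ≤ collapse A →
      {p ∈ A ×ˢ A | r p.1 p.2} = {p ∈ A ×ˢ A | s p.1 p.2} → r ≤ s := by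
    intro r s hr hrs x y hxy
    rcases hr hxy with rfl | hmem
    · exact s.refl' x
    · exact (hrs.subset (show (x, y) ∈ {p ∈ A ×ˢ A | r p.1 p.2} from ⟨hmem, hxy⟩)).2
  exact fun r hr s hs hrs => le_antisymm (hle hr hrs) (hle hs hrs.symm)

theorem sup_rel_iff_of_disjoint {A B : Set α} {r s : Setoid α} (hr : r ≤ collapse A)
    (hs : s ≤ collapse B) (hAB : Disjoint A B) {x y : α} : (r ⊔ s) x y ↔ r x y ∨ s x y := by
  have hdisj := Set.disjoint_left.1 hAB
  let union : Setoid α :=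
    { r := fun x y => r x y ∨ s x y
      iseqv := ⟨fun x => .inl (r.refl' x), Or.imp r.symm' s.symm', by
        rintro x y z (hxy | hxy) (hyz | hyz)
        · exact .inl (r.trans' hxy hyz)
        · rcases hr hxy, hs hyz with ⟨rfl | ⟨-, hy⟩, rfl | ⟨hy', -⟩⟩
          exacts [.inr hyz, .inr hyz, .inl hxy, (hdisj hy hy').elim]
        · rcases hs hxy, hr hyz with ⟨rfl | ⟨-, hy⟩, rfl | ⟨hy', -⟩⟩
          exacts [.inl hyz, .inl hyz, .inr hxy, (hdisj hy' hy).elim]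
        · exact .inr (s.trans' hxy hyz)⟩ }
  have hle : r ⊔ s ≤ union := sup_le (fun _ _ => .inl) (fun _ _ => .inr)
  have hr_le : r ≤ r ⊔ s := le_sup_left
  have hs_le : s ≤ r ⊔ s := le_sup_right
  exact ⟨fun h => hle h, Or.rec (fun h => hr_le h) (fun h => hs_le h)⟩

end EquivalenceRelations

/-- The relation "in the same block" of a noncrossing partition of points indexed counterclockwise
by `[a, b)`, those of index below `K` lying on a line in this order. Indices outside `[a, b)` are
singletons. -/
structure IsNoncrossingRel (a b K : ℕ) (r : Setoid ℕ) : Prop where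
  le_collapse : r ≤ collapse (Set.Ico a b)
  noncrossing ⦃x y z w : ℕ⦄ : x < y → y < z → z < w → r x z → r y w → r x y
  collinear ⦃x y z : ℕ⦄ : x < y → y < z → z < K → r x z → r x y

theorem finite_setOf_isNoncrossingRel (a b K : ℕ) : {r | IsNoncrossingRel a b K r}.Finite :=
  (finite_setOf_le_collapse (Set.finite_Ico a b)).subset fun _ hr => hr.le_collapse

/-- The finite set of all noncrossing relations on `[a, b)` with collinearity threshold `K`. -/
noncomputable def noncrossingRels (a b K : ℕ) : Finset (Setoid ℕ) :=
  (finite_setOf_isNoncrossingRel a b K).toFinset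

@[simp]
theorem mem_noncrossingRels {a b K : ℕ} {r : Setoid ℕ} :
    r ∈ noncrossingRels a b K ↔ IsNoncrossingRel a b K r := by
  simp only [noncrossingRels, Set.Finite.mem_toFinset, Set.mem_ofPred_eq]

/-- The successor of `a` in its `r`-class, with value `0` when `a` is the largest element of
its class. -/
noncomputable def nextInClass (r : Setoid ℕ) (a : ℕ) : ℕ :=
  sInf {j | a < j ∧ r a j}

theorem nextInClass_eq_zero_iff {r : Setoid ℕ} {a : ℕ} :
    nextInClass r a = 0 ↔ ∀ j, r a j → j ≤ a := by
  rw [nextInClass, Nat.sInf_eq_zero, Set.eq_empty_iff_forall_notMem]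
  simp only [Set.mem_ofPred_eq, not_lt_zero, false_and, false_or, not_and,
    imp_not_comm (a := a < _), not_lt]

theorem nextInClass_eq_iff {r : Setoid ℕ} {a k : ℕ} (hak : a < k) :
    nextInClass r a = k ↔ r a k ∧ ∀ j, a < j → j < k → ¬ r a j := by
  constructor
  · rintro rfl
    have hne : {j | a < j ∧ r a j}.Nonempty := Nat.nonempty_of_pos_sInf (pos_of_gt hak)
    exact ⟨(Nat.sInf_mem hne).2, fun j haj hj hr => Nat.notMem_of_lt_sInf hj ⟨haj, hr⟩⟩
  · rintro ⟨hk, hmin⟩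
    exact IsLeast.csInf_eq ⟨⟨hak, hk⟩, fun j hj => not_lt.1 fun hjk => hmin j hj.1 hjk hj.2⟩

namespace IsNoncrossingRel

variable {a b K : ℕ} {r : Setoid ℕ}

theorem eq_or_mem (h : IsNoncrossingRel a b K r) {i j : ℕ} (hij : r i j) :
    i = j ∨ (a ≤ i ∧ i < b) ∧ (a ≤ j ∧ j < b) :=
  h.le_collapse hij

theorem inf_collapse_Ico (h : IsNoncrossingRel a b K r) (c d : ℕ) :
    IsNoncrossingRel c d K (r ⊓ collapse (Set.Ico c d)) where
  le_collapse := inf_le_right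
  noncrossing x y z w hxy hyz hzw hxz hyw := by
    obtain ⟨hx, -⟩ := hxz.2.resolve_left (hxy.trans hyz).ne
    obtain ⟨hy, -⟩ := hyw.2.resolve_left (hyz.trans hzw).ne
    exact ⟨h.noncrossing hxy hyz hzw hxz.1 hyw.1, .inr ⟨hx, hy⟩⟩
  collinear x y z hxy hyz hzK hxz := by
    obtain ⟨hx, hz⟩ := hxz.2.resolve_left (hxy.trans hyz).ne
    exact ⟨h.collinear hxy hyz hzK hxz.1, .inr ⟨hx, hx.1.trans hxy.le, hyz.trans hz.2⟩⟩

theorem of_succ (h : IsNoncrossingRel (a + 1) b K r) : IsNoncrossingRel a b K r where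
  le_collapse _ _ hij := (h.eq_or_mem hij).imp_right (by grind)
  noncrossing := h.noncrossing
  collinear := h.collinear

theorem succ_iff :
    IsNoncrossingRel (a + 1) b K r ↔ IsNoncrossingRel a b K r ∧ nextInClass r a = 0 := by
  rw [nextInClass_eq_zero_iff]
  constructor
  · refine fun h => ⟨h.of_succ, fun j hj => ?_⟩
    grind [h.eq_or_mem hj]
  · rintro ⟨h, hmax⟩
    refine ⟨fun i j hij => ?_, h.noncrossing, h.collinear⟩
    have hi : i = a → j ≤ a := fun hia => hmax j (hia ▸ hij)
    have hj : j = a → i ≤ a := fun hja => hmax i (hja ▸ r.symm' hij)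
    have hmem := h.eq_or_mem hij
    change i = j ∨ _
    grind

theorem nextInClass_mem (h : IsNoncrossingRel a b K r) :
    nextInClass r a ∈ insert 0 (Ico (a + 1) b) := by
  by_cases hne : {j | a < j ∧ r a j}.Nonempty
  · have hnext : a < nextInClass r a ∧ r a (nextInClass r a) := Nat.sInf_mem hne
    grind [h.eq_or_mem hnext.2]
  · simp only [nextInClass, Set.not_nonempty_iff_eq_empty.1 hne, Nat.sInf_empty, mem_insert_self]

end IsNoncrossingRel

/-- The join of `s` with the relation obtained from `t` by moving `a` into the class of `k`. -/
def glue (a k : ℕ) (s t : Setoid ℕ) : Setoid ℕ :=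
  s ⊔ t.comap fun i => if i = a then k else i

section Glue

variable {a b k K : ℕ} {r s t : Setoid ℕ}

theorem glue_rel_iff (hak : a < k) (hkb : k < b) (hs : IsNoncrossingRel (a + 1) k K s)
    (ht : IsNoncrossingRel k b K t) {i j : ℕ} :
    glue a k s t i j ↔ i = j ∨ (a < i ∧ i < k ∧ a < j ∧ j < k ∧ s i j) ∨
      (i = a ∧ k ≤ j ∧ j < b ∧ t k j) ∨ (j = a ∧ k ≤ i ∧ i < b ∧ t i k) ∨
      (k ≤ i ∧ i < b ∧ k ≤ j ∧ j < b ∧ t i j) := by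
  have ht' : t.comap (fun i => if i = a then k else i) ≤ collapse (insert a (Set.Ico k b)) := by
    intro i j hij
    have := ht.eq_or_mem hij
    change i = j ∨ _
    grind
  have hdisj : Disjoint (Set.Ico (a + 1) k) (insert a (Set.Ico k b)) := by
    rw [Set.disjoint_left]
    grind
  have hglue : glue a k s t i j ↔ s i j ∨ t (if i = a then k else i) (if j = a then k else j) :=
    sup_rel_iff_of_disjoint hs.le_collapse ht' hdisj
  rw [hglue]
  have := hs.eq_or_mem (i := i) (j := j)
  have := ht.eq_or_mem (i := i) (j := j)
  have := ht.eq_or_mem (i := k) (j := j)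
  have := ht.eq_or_mem (i := i) (j := k)
  have : s i i := s.refl' i
  have : t k k := t.refl' k
  split_ifs <;> grind

theorem IsNoncrossingRel.glue (hak : a < k) (hkb : k < b) (hK : k = a + 1 ∨ K ≤ k)
    (hs : IsNoncrossingRel (a + 1) k K s) (ht : IsNoncrossingRel k b K t) :
    IsNoncrossingRel a b K (glue a k s t) where
  le_collapse i j hij := by
    rw [glue_rel_iff hak hkb hs ht] at hij
    change i = j ∨ _
    grind
  noncrossing x y z w hxy hyz hzw hxz hyw := by
    rw [glue_rel_iff hak hkb hs ht] at hxz hyw ⊢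
    have := hs.noncrossing hxy hyz hzw
    have := ht.noncrossing hxy hyz hzw
    have := @ht.noncrossing k y z w
    have : k = y → t k y := fun h => h ▸ t.refl' k
    rcases hxz with h | h | h | h | h <;> grind
  collinear x y z hxy hyz hzK hxz := by
    rw [glue_rel_iff hak hkb hs ht] at hxz ⊢
    have := hs.collinear hxy hyz hzK
    have := ht.collinear hxy hyz hzK
    have := @ht.collinear k y z
    have : k = y → t k y := fun h => h ▸ t.refl' k
    rcases hxz with h | h | h | h | h <;> grind

theorem nextInClass_glue (hak : a < k) (hkb : k < b) (hs : IsNoncrossingRel (a + 1) k K s)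
    (ht : IsNoncrossingRel k b K t) : nextInClass (glue a k s t) a = k := by
  rw [nextInClass_eq_iff hak]
  simp only [glue_rel_iff hak hkb hs ht]
  have : t k k := t.refl' k
  grind

theorem glue_inf_collapse_left (hak : a < k) (hkb : k < b) (hs : IsNoncrossingRel (a + 1) k K s)
    (ht : IsNoncrossingRel k b K t) : glue a k s t ⊓ collapse (Set.Ico (a + 1) k) = s := by
  ext i j
  refine inf_collapse_rel_iff.trans ?_
  rw [glue_rel_iff hak hkb hs ht]
  have : s i i := s.refl' i
  have := hs.eq_or_mem (i := i) (j := j)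
  grind

theorem glue_inf_collapse_right (hak : a < k) (hkb : k < b) (hs : IsNoncrossingRel (a + 1) k K s)
    (ht : IsNoncrossingRel k b K t) : glue a k s t ⊓ collapse (Set.Ico k b) = t := by
  ext i j
  refine inf_collapse_rel_iff.trans ?_
  rw [glue_rel_iff hak hkb hs ht]
  have : t i i := t.refl' i
  have := ht.eq_or_mem (i := i) (j := j)
  grind

theorem glue_inf_collapse (hak : a < k) (hkb : k < b) (hr : IsNoncrossingRel a b K r)
    (hnext : nextInClass r a = k) :
    glue a k (r ⊓ collapse (Set.Ico (a + 1) k)) (r ⊓ collapse (Set.Ico k b)) = r := by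
  obtain ⟨hk, hmin⟩ := (nextInClass_eq_iff hak).1 hnext
  have hcross : ∀ {i j}, a < i → i < k → k ≤ j → ¬ r i j := by
    intro i j hai hik hkj hij
    obtain rfl | hkj := hkj.eq_or_lt
    · exact hmin i hai hik (r.trans' hk (r.symm' hij))
    · exact hmin i hai hik (hr.noncrossing hai hik hkj hk hij)
  ext i j
  rw [glue_rel_iff hak hkb (hr.inf_collapse_Ico _ _) (hr.inf_collapse_Ico _ _)]
  simp only [inf_collapse_rel_iff, Set.mem_Ico]
  have := hr.eq_or_mem (i := i) (j := j)
  have : r i i := r.refl' i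
  have hleft : i = a → (r i j ↔ r k j) := by
    rintro rfl
    exact ⟨r.trans' (r.symm' hk), r.trans' hk⟩
  have hright : j = a → (r i j ↔ r i k) := by
    rintro rfl
    exact ⟨fun h => r.trans' h hk, fun h => r.trans' h (r.symm' hk)⟩
  have := @hcross i j
  have := @hcross j i
  have := r.comm' (x := i) (y := j)
  have := hmin i
  have := hmin j
  grind

end Glue

section Counting

variable {a b k K : ℕ}

theorem card_noncrossingRels_of_le (hba : b ≤ a) : #(noncrossingRels a b K) = 1 := by
  have hbot : IsNoncrossingRel a b K ⊥ :=
    ⟨bot_le, fun x y z w hxy hyz _ hxz _ => absurd hxz (hxy.trans hyz).ne,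
      fun x y z hxy hyz _ hxz => absurd hxz (hxy.trans hyz).ne⟩
  refine card_eq_one.2 ⟨⊥, eq_singleton_iff_unique_mem.2 ⟨mem_noncrossingRels.2 hbot, ?_⟩⟩
  intro r hr
  refine eq_bot_iff.2 fun i j hij => ((mem_noncrossingRels.1 hr).eq_or_mem hij).resolve_right ?_
  omega

theorem card_filter_nextInClass_eq (hak : a < k) (hkb : k < b) (hK : k = a + 1 ∨ K ≤ k) :
    #{r ∈ noncrossingRels a b K | nextInClass r a = k} =
      #(noncrossingRels (a + 1) k K) * #(noncrossingRels k b K) := by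
  rw [← card_product]
  refine card_nbij'
    (fun r => (r ⊓ collapse (Set.Ico (a + 1) k), r ⊓ collapse (Set.Ico k b)))
    (fun p => glue a k p.1 p.2) ?_ ?_ ?_ ?_
  all_goals
    simp only [Set.MapsTo, Set.LeftInvOn, Set.RightInvOn, coe_filter, coe_product,
      mem_noncrossingRels, Set.mem_prod, mem_coe, Prod.forall, Prod.mk.injEq, Set.mem_ofPred_eq]
  · exact fun r hr => ⟨hr.1.inf_collapse_Ico _ _, hr.1.inf_collapse_Ico _ _⟩
  · exact fun s t h => ⟨h.1.glue hak hkb hK h.2, nextInClass_glue hak hkb h.1 h.2⟩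
  · exact fun r hr => glue_inf_collapse hak hkb hr.1 hr.2
  · exact fun s t h =>
      ⟨glue_inf_collapse_left hak hkb h.1 h.2, glue_inf_collapse_right hak hkb h.1 h.2⟩

theorem filter_nextInClass_eq_empty (hak : a + 1 < k) (hkK : k < K) :
    {r ∈ noncrossingRels a b K | nextInClass r a = k} = ∅ := by
  refine filter_eq_empty_iff.2 fun r hr hnext => ?_
  obtain ⟨hk, hmin⟩ := (nextInClass_eq_iff (by omega)).1 hnext
  exact hmin (a + 1) (by omega) hak
    ((mem_noncrossingRels.1 hr).collinear (by omega) hak hkK hk)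

theorem card_noncrossingRels_eq_sum (a b K : ℕ) :
    #(noncrossingRels a b K) = #(noncrossingRels (a + 1) b K) +
      ∑ k ∈ Ico (a + 1) b with k = a + 1 ∨ K ≤ k,
        #(noncrossingRels (a + 1) k K) * #(noncrossingRels k b K) := by
  have hmaps : Set.MapsTo (nextInClass · a) (noncrossingRels a b K)
      (insert 0 (Ico (a + 1) b) : Finset ℕ) :=
    fun r hr => (mem_noncrossingRels.1 hr).nextInClass_mem
  have hisolated : {r ∈ noncrossingRels a b K | nextInClass r a = 0} =
      noncrossingRels (a + 1) b K := by
    ext r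
    simp only [mem_filter, mem_noncrossingRels, IsNoncrossingRel.succ_iff (a := a)]
  rw [card_eq_sum_card_fiberwise hmaps, sum_insert (by simp), hisolated, sum_filter]
  refine congrArg _ (sum_congr rfl fun k hk => ?_)
  rw [mem_Ico] at hk
  split_ifs with hK
  · exact card_filter_nextInClass_eq (by omega) hk.2 hK
  · rw [filter_nextInClass_eq_empty (by omega) (by omega), card_empty]

theorem card_noncrossingRels_add_one (a b K : ℕ) :
    #(noncrossingRels (a + 1) (b + 1) (K + 1)) = #(noncrossingRels a b K) := by
  induction hn : b - a using Nat.strong_induction_on generalizing a b with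
  | _ n ih =>
    obtain hba | hab := le_or_gt b a
    · rw [card_noncrossingRels_of_le (by omega), card_noncrossingRels_of_le hba]
    · rw [card_noncrossingRels_eq_sum, card_noncrossingRels_eq_sum a b, sum_filter, sum_filter,
        ← sum_Ico_add' _ (a + 1) b 1, ih _ (by omega) (a + 1) b rfl]
      refine congrArg _ (sum_congr rfl fun k hk => ?_)
      rw [mem_Ico] at hk
      rw [ih _ (by omega) (a + 1) k rfl, ih _ (by omega) k b rfl]
      simp only [add_left_inj, add_le_add_iff_right]

theorem card_noncrossingRels_eq_catalan (a n : ℕ) (hK : K ≤ a + 2) :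
    #(noncrossingRels a (a + n) K) = catalan n := by
  induction n using Nat.strong_induction_on generalizing a with
  | _ n ih =>
    obtain _ | n := n
    · rw [add_zero, card_noncrossingRels_of_le le_rfl, catalan_zero]
    · have hfilter : {k ∈ Ico (a + 1) (a + 1 + n) | k = a + 1 ∨ K ≤ k} =
          Ico (a + 1) (a + 1 + n) := filter_true_of_mem (by grind)
      have hprod : ∀ i ∈ range n, #(noncrossingRels (a + 1) (a + 1 + i) K) *
          #(noncrossingRels (a + 1 + i) (a + 1 + n) K) = catalan i * catalan (n - i) := by
        intro i hi
        rw [mem_range] at hi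
        have hsplit : a + 1 + n = a + 1 + i + (n - i) := by omega
        rw [hsplit, ih i (by omega) _ (by omega), ih (n - i) (by omega) _ (by omega)]
      rw [← add_assoc a, add_right_comm, card_noncrossingRels_eq_sum, hfilter,
        sum_Ico_eq_sum_range, add_tsub_cancel_left, sum_congr rfl hprod,
        ih n (by omega) _ (by omega), catalan_succ,
        Fin.sum_univ_eq_sum_range (fun i => catalan i * catalan (n - i)), sum_range_succ,
        Nat.sub_self, catalan_zero, mul_one, add_comm]

theorem card_noncrossingRels_of_succ_lt (haK : a + 1 < K) (hKb : K ≤ b) :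
    #(noncrossingRels a b K) = 2 * #(noncrossingRels (a + 1) b K) +
      ∑ k ∈ Ico K b, #(noncrossingRels (a + 1) k K) * catalan (b - k) := by
  have hfilter : {k ∈ Ico (a + 1) b | k = a + 1 ∨ K ≤ k} = insert (a + 1) (Ico K b) := by
    ext k
    simp only [mem_filter, mem_insert, mem_Ico]
    omega
  rw [card_noncrossingRels_eq_sum, hfilter, sum_insert (by grind),
    card_noncrossingRels_of_le le_rfl, one_mul, ← add_assoc, ← two_mul]
  refine congrArg _ (sum_congr rfl fun k hk => ?_)
  rw [mem_Ico] at hk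
  rw [← card_noncrossingRels_eq_catalan k (b - k) (by omega : K ≤ k + 2),
    Nat.add_sub_cancel' hk.2.le]

end Counting

section Orientation

theorem disjoint_convexHull_of_le_of_lt {E : Type*} [AddCommGroup E] [Module ℝ E] {S T : Set E}
    (f : E →ₗ[ℝ] ℝ) (c : ℝ) (hS : ∀ x ∈ S, f x ≤ c) (hT : ∀ x ∈ T, c < f x) :
    Disjoint (convexHull ℝ S) (convexHull ℝ T) :=
  Set.disjoint_of_subset (convexHull_min hS (convex_halfSpace_le f.isLinear c))
    (convexHull_min hT (convex_halfSpace_gt f.isLinear c))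
    (Set.disjoint_left.2 fun _ (hle : _ ≤ c) (hlt : c < _) => hle.not_gt hlt)

/-- Twice the signed area of the triangle `A B C`; it is positive when the triangle is oriented
counterclockwise. -/
def orient (A B C : ℂ) : ℝ :=
  (B.re - A.re) * (C.im - A.im) - (B.im - A.im) * (C.re - A.re)

theorem orient_rotate (A B C : ℂ) : orient B C A = orient A B C := by
  unfold orient
  ring

theorem orient_swap (A B C : ℂ) : orient A C B = -orient A B C := by
  unfold orient
  ring

theorem orient_self_left_right (A B : ℂ) : orient A B A = 0 := by
  unfold orient
  ring

theorem orient_self_right (A B : ℂ) : orient A B B = 0 := by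
  unfold orient
  ring

theorem disjoint_convexHull_of_orient {S T : Set ℂ} (A B : ℂ) (hS : ∀ z ∈ S, orient A B z ≤ 0)
    (hT : ∀ z ∈ T, 0 < orient A B z) : Disjoint (convexHull ℝ S) (convexHull ℝ T) := by
  let f : ℂ →ₗ[ℝ] ℝ := (B.re - A.re) • Complex.imLm - (B.im - A.im) • Complex.reLm
  have horient : ∀ z, orient A B z = f z - f A := by
    intro z
    simp only [f, orient, LinearMap.sub_apply, LinearMap.smul_apply, Complex.imLm_coe,
      Complex.reLm_coe, smul_eq_mul]
    ring
  simp only [horient, sub_nonpos, sub_pos] at hS hT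
  exact disjoint_convexHull_of_le_of_lt f (f A) hS hT

-- The identity `[BCD] A + [ABD] C = [ACD] B + [ABC] D` between signed areas, in which both sides
-- have the same total weight, exhibits the common point of the diagonals.
theorem not_disjoint_convexHull_of_orient {S T : Set ℂ} {A B C D : ℂ} (hA : A ∈ S) (hB : B ∈ T)
    (hC : C ∈ S) (hD : D ∈ T) (hABC : 0 ≤ orient A B C) (hABD : 0 < orient A B D)
    (hACD : 0 ≤ orient A C D) (hBCD : 0 ≤ orient B C D) :
    ¬ Disjoint (convexHull ℝ S) (convexHull ℝ T) := by
  set u := orient B C D + orient A B D with hu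
  have hu' : u = orient A C D + orient A B C := by
    simp only [hu, orient]
    ring
  have hu0 : 0 < u := by positivity
  have hpoint : (orient B C D / u) • A + (orient A B D / u) • C =
      (orient A C D / u) • B + (orient A B C / u) • D := by
    simp only [div_eq_inv_mul, mul_smul, ← smul_add]
    congr 1
    apply Complex.ext <;>
      simp only [orient, Complex.add_re, Complex.add_im, Complex.smul_re, Complex.smul_im,
        smul_eq_mul] <;>
      ring
  refine Set.not_disjoint_iff.2 ⟨_, segment_subset_convexHull hA hC
    ⟨_, _, by positivity, by positivity, ?_, rfl⟩, segment_subset_convexHull hB hD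
    ⟨_, _, by positivity, by positivity, ?_, hpoint.symm⟩⟩
  · rw [← add_div, ← hu, div_self hu0.ne']
  · rw [← add_div, ← hu', div_self hu0.ne']

theorem mem_segment_of_im_eq_zero {A B C : ℂ} (hA : A.im = 0) (hB : B.im = 0) (hC : C.im = 0)
    (hAB : A.re ≤ B.re) (hBC : B.re ≤ C.re) : B ∈ segment ℝ A C := by
  lift A to ℝ using hA
  lift B to ℝ using hB
  lift C to ℝ using hC
  rw [Complex.ofReal_re, Complex.ofReal_re] at hAB hBC
  obtain ⟨a, c, ha, hc, hac, rfl⟩ : B ∈ segment ℝ A C := by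
    rw [segment_eq_Icc (hAB.trans hBC)]
    exact ⟨hAB, hBC⟩
  exact ⟨a, c, ha, hc, hac, by simp⟩

end Orientation

/-- The points `p 0, …, p (N - 1)` are the boundary points, listed counterclockwise, of a convex
polygon having all of `p 0, …, p (K - 1)` on one side, which lies on the real axis, and having the
remaining points as further vertices. -/
structure IsSegmentConvex (N K : ℕ) (p : ℕ → ℂ) : Prop where
  two_le : 2 ≤ K
  im_eq_zero ⦃i : ℕ⦄ : i < K → (p i).im = 0
  re_lt_re ⦃i j : ℕ⦄ : i < j → j < K → (p i).re < (p j).re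
  orient_pos ⦃i j k : ℕ⦄ : i < j → j < k → k < N → K ≤ k → 0 < orient (p i) (p j) (p k)

namespace IsSegmentConvex

variable {N K : ℕ} {p : ℕ → ℂ}

theorem orient_nonneg (hp : IsSegmentConvex N K p) {i j k : ℕ} (hij : i ≤ j) (hjk : j ≤ k)
    (hkN : k < N) : 0 ≤ orient (p i) (p j) (p k) := by
  obtain rfl | hij := hij.eq_or_lt
  · rw [← orient_rotate, orient_self_left_right]
  obtain rfl | hjk := hjk.eq_or_lt
  · rw [orient_self_right]
  obtain hkK | hKk := lt_or_ge k K
  · rw [orient, hp.im_eq_zero hkK, hp.im_eq_zero (hjk.trans hkK),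
      hp.im_eq_zero (hij.trans (hjk.trans hkK))]
    simp only [sub_self, mul_zero, zero_mul, le_refl]
  · exact (hp.orient_pos hij hjk hkN hKk).le

theorem disjoint_convexHull_Iio_Ico (hp : IsSegmentConvex N K p) (g : ℕ) :
    Disjoint (convexHull ℝ (p '' Set.Iio g)) (convexHull ℝ (p '' Set.Ico g N)) := by
  obtain hNg | hgN := le_or_gt N g
  · rw [Set.Ico_eq_empty hNg.not_gt, Set.image_empty, convexHull_empty]
    exact Set.disjoint_empty _
  obtain hKg | hgK := le_or_gt K g
  · have hK := hp.two_le
    refine disjoint_convexHull_of_orient (p 0) (p (g - 1)) (Set.forall_mem_image.2 fun i hi => ?_)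
      (Set.forall_mem_image.2 fun i hi => ?_)
    · rw [orient_swap, neg_nonpos]
      exact hp.orient_nonneg (by omega) (Nat.le_sub_one_of_lt hi) (by omega)
    · exact hp.orient_pos (by omega) (by grind) hi.2 (hKg.trans hi.1)
  obtain hNK | hKN := le_or_gt N K
  · have hmono : StrictMonoOn (fun i => (p i).re) (Set.Iio K) :=
      fun i _ j hj hij => hp.re_lt_re hij hj
    refine (disjoint_convexHull_of_le_of_lt (-Complex.reLm) (-(p g).re)
      (Set.forall_mem_image.2 fun i hi => ?_) (Set.forall_mem_image.2 fun i hi => ?_)).symm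
    · exact neg_le_neg (hmono.monotoneOn hgK (hi.2.trans_le hNK) hi.1)
    · exact neg_lt_neg (hp.re_lt_re hi hgK)
  · refine (disjoint_convexHull_of_orient (p g) (p (N - 1)) (Set.forall_mem_image.2 fun i hi => ?_)
      (Set.forall_mem_image.2 fun i hi => ?_)).symm
    · rw [orient_swap, neg_nonpos]
      exact hp.orient_nonneg hi.1 (Nat.le_sub_one_of_lt hi.2) (by omega)
    · rw [orient_rotate]
      exact hp.orient_pos hi (by omega) (by omega) (by omega)

theorem injOn (hp : IsSegmentConvex N K p) : Set.InjOn p (Set.Iio N) := by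
  have hne : ∀ {i j}, i < j → j < N → p i ≠ p j := fun {i j} hij hjN heq =>
    Set.disjoint_left.1 (hp.disjoint_convexHull_Iio_Ico j)
      (subset_convexHull ℝ _ (Set.mem_image_of_mem p hij))
      (heq ▸ subset_convexHull ℝ _ (Set.mem_image_of_mem p ⟨le_rfl, hjN⟩))
  intro i hi j hj heq
  obtain hij | rfl | hji := lt_trichotomy i j
  exacts [(hne hij hj heq).elim, rfl, (hne hji hi heq.symm).elim]

theorem disjoint_convexHull_Ioo (hp : IsSegmentConvex N K p) {u v : ℕ} (huv : u < v) (hKv : K ≤ v)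
    (hvN : v < N) :
    Disjoint (convexHull ℝ (p '' (Set.Iic u ∪ Set.Ico v N))) (convexHull ℝ (p '' Set.Ioo u v)) := by
  refine disjoint_convexHull_of_orient (p v) (p u) (Set.forall_mem_image.2 fun i hi => ?_)
    (Set.forall_mem_image.2 fun i hi => ?_)
  · obtain hiu | ⟨hvi, hiN⟩ := hi
    · rw [orient_swap, neg_nonpos, ← orient_rotate]
      exact hp.orient_nonneg hiu huv.le hvN
    · rw [← orient_rotate, orient_swap, neg_nonpos]
      exact hp.orient_nonneg huv.le hvi hiN
  · rw [← orient_rotate]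
    exact hp.orient_pos hi.1 hi.2 hvN hKv

end IsSegmentConvex

section Classes

variable {N K : ℕ} {p : ℕ → ℂ} {r : Setoid ℕ} {i j : ℕ}

namespace IsNoncrossingRel

theorem rel_subset_Iio (hr : IsNoncrossingRel 0 N K r) (hi : i < N) : {k | r i k} ⊆ Set.Iio N := by
  intro k hk
  obtain rfl | ⟨-, hk⟩ := hr.eq_or_mem hk
  exacts [hi, hk.2]

theorem disjoint_convexHull_of_mem_gap (hr : IsNoncrossingRel 0 N K r) (hp : IsSegmentConvex N K p)
    (hi : i < N) (hij : ¬ r i j) {x z : ℕ} (hx : r i x) (hz : r i z) (hxj : x < j) (hjz : j < z) :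
    Disjoint (convexHull ℝ (p '' {k | r i k})) (convexHull ℝ (p '' {k | r j k})) := by
  obtain ⟨u, ⟨hiu, huj⟩, hu⟩ := BddAbove.exists_isGreatest_of_nonempty
    (S := {k | r i k ∧ k < j}) ⟨j, fun k hk => hk.2.le⟩ ⟨x, hx, hxj⟩
  obtain ⟨v, ⟨hiv, hjv⟩, hv⟩ := BddBelow.exists_isLeast_of_nonempty
    (S := {k | r i k ∧ j < k}) ⟨j, fun k hk => hk.2.le⟩ ⟨z, hz, hjz⟩
  have huv : r u v := r.trans' (r.symm' hiu) hiv
  have huj' : ¬ r u j := fun h => hij (r.trans' hiu h)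
  have hKv : K ≤ v := not_lt.1 fun hvK => huj' (hr.collinear huj hjv hvK huv)
  have houter : {k | r i k} ⊆ Set.Iic u ∪ Set.Ico v N := by
    intro k hk
    obtain hkj | rfl | hjk := lt_trichotomy k j
    exacts [.inl (hu ⟨hk, hkj⟩), (hij hk).elim, .inr ⟨hv ⟨hk, hjk⟩, hr.rel_subset_Iio hi hk⟩]
  have hinner : {k | r j k} ⊆ Set.Ioo u v := by
    intro k hk
    have hik : ¬ r i k := fun h => hij (r.trans' h (r.symm' hk))
    have hku : k ≠ u := by rintro rfl; exact hik hiu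
    have hkv : k ≠ v := by rintro rfl; exact hik hiv
    refine ⟨lt_of_not_ge fun hle => hik ?_, lt_of_not_ge fun hle => huj' ?_⟩
    · exact r.trans' hiu (r.symm'
        (hr.noncrossing (lt_of_le_of_ne hle hku) huj hjv (r.symm' hk) huv))
    · exact hr.noncrossing huj hjv (lt_of_le_of_ne hle hkv.symm) huv hk
  exact (hp.disjoint_convexHull_Ioo (huj.trans hjv) hKv (hr.rel_subset_Iio hi hiv)).mono
    (convexHull_mono (Set.image_mono houter)) (convexHull_mono (Set.image_mono hinner))

theorem disjoint_convexHull_of_separated (hr : IsNoncrossingRel 0 N K r)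
    (hp : IsSegmentConvex N K p) (hj : j < N) (hij : ¬ r i j)
    (hilt : ∀ k, r i k → k < j) (hjgt : ∀ k, r j k → i < k) :
    Disjoint (convexHull ℝ (p '' {k | r i k})) (convexHull ℝ (p '' {k | r j k})) := by
  obtain ⟨u, hiu, hu⟩ := BddAbove.exists_isGreatest_of_nonempty (S := {k | r i k})
    ⟨j, fun k hk => (hilt k hk).le⟩ ⟨i, r.refl' i⟩
  have hleft : {k | r i k} ⊆ Set.Iio (u + 1) := fun k hk => Nat.lt_succ_of_le (hu hk)
  have hright : {k | r j k} ⊆ Set.Ico (u + 1) N := by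
    intro k hk
    have hik : ¬ r i k := fun h => hij (r.trans' h (r.symm' hk))
    have hku : k ≠ u := by rintro rfl; exact hik hiu
    refine ⟨Nat.succ_le_of_lt (lt_of_not_ge fun hle => hik ?_), hr.rel_subset_Iio hj hk⟩
    exact hr.noncrossing (hjgt k hk) (lt_of_le_of_ne hle hku) (hilt u hiu) hiu (r.symm' hk)
  exact (hp.disjoint_convexHull_Iio_Ico (u + 1)).mono
    (convexHull_mono (Set.image_mono hleft)) (convexHull_mono (Set.image_mono hright))

theorem disjoint_convexHull (hr : IsNoncrossingRel 0 N K r) (hp : IsSegmentConvex N K p)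
    (hi : i < N) (hj : j < N) (hij : ¬ r i j) :
    Disjoint (convexHull ℝ (p '' {k | r i k})) (convexHull ℝ (p '' {k | r j k})) := by
  wlog hlt : i < j generalizing i j
  · have hne : i ≠ j := by rintro rfl; exact hij (r.refl' i)
    exact (this hj hi (mt r.symm' hij) (by omega)).symm
  by_cases hi_above : ∃ z, r i z ∧ j < z
  · obtain ⟨z, hz, hjz⟩ := hi_above
    exact hr.disjoint_convexHull_of_mem_gap hp hi hij (r.refl' i) hz hlt hjz
  by_cases hj_below : ∃ x, r j x ∧ x < i
  · obtain ⟨x, hx, hxi⟩ := hj_below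
    exact (hr.disjoint_convexHull_of_mem_gap hp hj (mt r.symm' hij) hx (r.refl' j) hxi hlt).symm
  push Not at hi_above hj_below
  refine hr.disjoint_convexHull_of_separated hp hj hij
    (fun k hk => lt_of_le_of_ne (hi_above k hk) ?_) fun k hk => lt_of_le_of_ne (hj_below k hk) ?_
  · rintro rfl
    exact hij hk
  · rintro rfl
    exact hij (r.symm' hk)

end IsNoncrossingRel

theorem isNoncrossingRel_iff_disjoint_convexHull (hp : IsSegmentConvex N K p)
    (hr : r ≤ collapse (Set.Ico 0 N)) :
    IsNoncrossingRel 0 N K r ↔ ∀ i < N, ∀ j < N, ¬ r i j →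
      Disjoint (convexHull ℝ (p '' {k | r i k})) (convexHull ℝ (p '' {k | r j k})) := by
  refine ⟨fun h i hi j hj => h.disjoint_convexHull hp hi hj, fun h => ?_⟩
  have hlt : ∀ {i j}, i < j → r i j → j < N := fun hij hrel =>
    ((hr hrel).resolve_left hij.ne).2.2
  have hcollinear : ∀ ⦃x y z⦄, x < y → y < z → z < K → r x z → r x y := by
    intro x y z hxy hyz hzK hxz
    have hzN := hlt (hxy.trans hyz) hxz
    have hyK := hyz.trans hzK
    by_contra hrel
    have hseg : p y ∈ segment ℝ (p x) (p z) :=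
      mem_segment_of_im_eq_zero (hp.im_eq_zero (hxy.trans hyK)) (hp.im_eq_zero hyK)
        (hp.im_eq_zero hzK) (hp.re_lt_re hxy hyK).le (hp.re_lt_re hyz hzK).le
    exact Set.disjoint_left.1 (h x (by omega) y (by omega) hrel)
      (segment_subset_convexHull (Set.mem_image_of_mem p (r.refl' x))
        (Set.mem_image_of_mem p hxz) hseg)
      (subset_convexHull ℝ _ (Set.mem_image_of_mem p (r.refl' y)))
  refine ⟨hr, fun x y z w hxy hyz hzw hxz hyw => ?_, hcollinear⟩
  have hwN := hlt (hyz.trans hzw) hyw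
  obtain hwK | hKw := lt_or_ge w K
  · exact hcollinear hxy hyz (hzw.trans hwK) hxz
  · by_contra hrel
    exact not_disjoint_convexHull_of_orient (Set.mem_image_of_mem p (r.refl' x))
      (Set.mem_image_of_mem p (r.refl' y)) (Set.mem_image_of_mem p hxz)
      (Set.mem_image_of_mem p hyw) (hp.orient_nonneg hxy.le hyz.le (hzw.trans hwN))
      (hp.orient_pos hxy (hyz.trans hzw) hwN hKw)
      (hp.orient_nonneg (hxy.trans hyz).le hzw.le hwN) (hp.orient_nonneg hyz.le hzw.le hwN)
      (h x (by omega) y (by omega) hrel)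

end Classes

section Indexing

variable {N K : ℕ} {p : ℕ → ℂ}

/-- The relation on indices below `N` of pointing into the same block of a partition `π` of
`{p 0, …, p (N - 1)}`; the other indices are singletons. -/
noncomputable def indexSetoid (π : Finpartition ((range N).image p)) : Setoid ℕ :=
  Setoid.ker (fun i => π.part (p i)) ⊓ collapse (Set.Ico 0 N)

theorem indexSetoid_le_collapse (π : Finpartition ((range N).image p)) :
    indexSetoid π ≤ collapse (Set.Ico 0 N) :=
  inf_le_right

theorem apply_mem_image_range {i : ℕ} (hi : i < N) : p i ∈ (range N).image p :=
  mem_image_of_mem p (mem_range.2 hi)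

theorem indexSetoid_rel_iff {π : Finpartition ((range N).image p)} {i j : ℕ} (hi : i < N) :
    indexSetoid π i j ↔ j < N ∧ p j ∈ π.part (p i) := by
  refine inf_collapse_rel_iff.trans ?_
  rw [Setoid.ker_def]
  constructor
  · rintro ⟨hpart, rfl | ⟨-, -, hj⟩⟩
    · exact ⟨hi, π.mem_part (apply_mem_image_range hi)⟩
    · exact ⟨hj, hpart ▸ π.mem_part (apply_mem_image_range hj)⟩
  · rintro ⟨hj, hmem⟩
    have hpart := (π.mem_part_iff_part_eq_part (apply_mem_image_range hj)
      (apply_mem_image_range hi)).1 hmem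
    exact ⟨hpart.symm, .inr ⟨⟨i.zero_le, hi⟩, j.zero_le, hj⟩⟩

theorem coe_part_eq_image (π : Finpartition ((range N).image p)) {i : ℕ} (hi : i < N) :
    (π.part (p i) : Set ℂ) = p '' {j | indexSetoid π i j} := by
  ext z
  simp only [mem_coe, Set.mem_image, Set.mem_ofPred_eq, indexSetoid_rel_iff hi]
  constructor
  · intro hz
    obtain ⟨j, hj, rfl⟩ := mem_image.1 (π.part_subset _ hz)
    exact ⟨j, ⟨mem_range.1 hj, hz⟩, rfl⟩
  · rintro ⟨j, ⟨-, hj⟩, rfl⟩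
    exact hj

theorem mem_parts_iff_exists_part (π : Finpartition ((range N).image p)) {B : Finset ℂ} :
    B ∈ π.parts ↔ ∃ i < N, π.part (p i) = B := by
  constructor
  · intro hB
    obtain ⟨z, hz, rfl⟩ := π.part_surjOn hB
    obtain ⟨i, hi, rfl⟩ := mem_image.1 hz
    exact ⟨i, mem_range.1 hi, rfl⟩
  · rintro ⟨i, hi, rfl⟩
    exact π.part_mem.2 (apply_mem_image_range hi)

theorem indexSetoid_injective :
    Function.Injective (indexSetoid : Finpartition ((range N).image p) → Setoid ℕ) := by
  intro π μ h
  have hpart : ∀ i < N, π.part (p i) = μ.part (p i) := fun i hi =>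
    coe_injective (by rw [coe_part_eq_image π hi, coe_part_eq_image μ hi, h])
  ext B
  rw [mem_parts_iff_exists_part, mem_parts_iff_exists_part]
  exact exists_congr fun i => and_congr_right fun hi => by rw [hpart i hi]

theorem exists_indexSetoid_eq (hp : Set.InjOn p (Set.Iio N)) {r : Setoid ℕ}
    (hr : r ≤ collapse (Set.Ico 0 N)) :
    ∃ π : Finpartition ((range N).image p), indexSetoid π = r := by
  classical
  have hinv : ∀ ⦃i⦄, i < N → Function.invFunOn p (Set.Iio N) (p i) = i := hp.leftInvOn_invFunOn
  refine ⟨Finpartition.ofSetSetoid (r.comap (Function.invFunOn p (Set.Iio N))) _, ?_⟩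
  ext i j
  obtain hi | hNi := lt_or_ge i N
  · rw [indexSetoid_rel_iff hi, Finpartition.mem_part_ofSetSetoid_iff_rel, Setoid.comap_rel,
      hinv hi]
    constructor
    · rintro ⟨hj, -, -, hij⟩
      rwa [hinv hj] at hij
    · intro hij
      have hj : j < N := by
        obtain rfl | ⟨-, -, hj⟩ := hr hij
        exacts [hi, hj]
      rw [hinv hj]
      exact ⟨hj, apply_mem_image_range hi, apply_mem_image_range hj, hij⟩
  · have hnot : i ∉ Set.Ico 0 N := fun h => hNi.not_gt h.2
    rw [rel_iff_eq_of_notMem (indexSetoid_le_collapse _) hnot, rel_iff_eq_of_notMem hr hnot]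

theorem isNoncrossing_iff_indexSetoid (hp : IsSegmentConvex N K p)
    {π : Finpartition ((range N).image p)} :
    IsNoncrossing π ↔ IsNoncrossingRel 0 N K (indexSetoid π) := by
  rw [isNoncrossingRel_iff_disjoint_convexHull hp (indexSetoid_le_collapse π)]
  have hne : ∀ {i j}, i < N → j < N → (¬ indexSetoid π i j ↔ π.part (p i) ≠ π.part (p j)) := by
    intro i j hi hj
    rw [indexSetoid_rel_iff hi, and_iff_right hj, ne_comm,
      π.mem_part_iff_part_eq_part (apply_mem_image_range hj) (apply_mem_image_range hi)]
  constructor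
  · intro h i hi j hj hij
    rw [← coe_part_eq_image π hi, ← coe_part_eq_image π hj]
    exact h (π.part_mem.2 (apply_mem_image_range hi)) (π.part_mem.2 (apply_mem_image_range hj))
      ((hne hi hj).1 hij)
  · intro h B hB C hC hBC
    obtain ⟨i, hi, rfl⟩ := (mem_parts_iff_exists_part π).1 hB
    obtain ⟨j, hj, rfl⟩ := (mem_parts_iff_exists_part π).1 hC
    rw [coe_part_eq_image π hi, coe_part_eq_image π hj]
    exact h i hi j hj ((hne hi hj).2 hBC)

theorem card_NC_image_range (hp : IsSegmentConvex N K p) :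
    Nat.card (NC ((range N).image p)) = #(noncrossingRels 0 N K) := by
  let f : NC ((range N).image p) → noncrossingRels 0 N K := fun π =>
    ⟨indexSetoid π.1, mem_noncrossingRels.2 ((isNoncrossing_iff_indexSetoid hp).1 π.2)⟩
  have hf : Function.Bijective f := by
    refine ⟨fun π μ h => Subtype.ext (indexSetoid_injective (Subtype.ext_iff.1 h)), ?_⟩
    rintro ⟨r, hr⟩
    rw [mem_noncrossingRels] at hr
    obtain ⟨π, rfl⟩ := exists_indexSetoid_eq hp.injOn hr.le_collapse
    exact ⟨⟨π, (isNoncrossing_iff_indexSetoid hp).2 hr⟩, rfl⟩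
  rw [Nat.card_eq_of_bijective f hf, Nat.card_eq_finsetCard]

end Indexing

section Semicircle

theorem orient_exp (α β γ : ℝ) :
    orient (Complex.exp (α * Complex.I)) (Complex.exp (β * Complex.I))
      (Complex.exp (γ * Complex.I)) =
      4 * Real.sin ((β - α) / 2) * Real.sin ((γ - β) / 2) * Real.sin ((γ - α) / 2) := by
  have hsum : orient (Complex.exp (α * Complex.I)) (Complex.exp (β * Complex.I))
      (Complex.exp (γ * Complex.I)) =
      Real.sin (β - α) + Real.sin (γ - β) - Real.sin (γ - α) := by
    simp only [orient, Complex.exp_ofReal_mul_I_re, Complex.exp_ofReal_mul_I_im, Real.sin_sub]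
    ring
  obtain ⟨u, hu⟩ : ∃ u, β - α = 2 * u := ⟨(β - α) / 2, by ring⟩
  obtain ⟨v, hv⟩ : ∃ v, γ - β = 2 * v := ⟨(γ - β) / 2, by ring⟩
  have huv : γ - α = 2 * (u + v) := by linarith
  rw [hsum, hu, hv, huv, mul_div_cancel_left₀ _ two_ne_zero, mul_div_cancel_left₀ _ two_ne_zero,
    mul_div_cancel_left₀ _ two_ne_zero, Real.sin_two_mul, Real.sin_two_mul, Real.sin_two_mul,
    Real.sin_add, Real.cos_add]
  linear_combination (-2 * Real.sin u * Real.cos u) * Real.sin_sq_add_cos_sq v +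
    (-2 * Real.sin v * Real.cos v) * Real.sin_sq_add_cos_sq u

theorem orient_exp_pos {α β γ : ℝ} (hαβ : α < β) (hβγ : β < γ) (hγα : γ < α + 2 * Real.pi) :
    0 < orient (Complex.exp (α * Complex.I)) (Complex.exp (β * Complex.I))
      (Complex.exp (γ * Complex.I)) := by
  have hsin : ∀ {x y : ℝ}, x < y → y < x + 2 * Real.pi → 0 < Real.sin ((y - x) / 2) :=
    fun hxy hyx => Real.sin_pos_of_pos_of_lt_pi (by linarith) (by linarith)
  rw [orient_exp]
  have := hsin hαβ (hβγ.trans hγα)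
  have := hsin hβγ (by linarith)
  have := hsin (hαβ.trans hβγ) hγα
  positivity

theorem orient_pos_of_im_eq_zero {A B C : ℂ} (hA : A.im = 0) (hB : B.im = 0) (hAB : A.re < B.re)
    (hC : 0 < C.im) : 0 < orient A B C := by
  rw [orient, hA, hB, sub_zero, sub_zero, zero_mul, sub_zero]
  exact mul_pos (sub_pos.2 hAB) hC

theorem orient_exp_pos_of_mem_Icc {A : ℂ} (hA : A.im = 0) (hA' : A.re ∈ Set.Icc (-1) 1) {β γ : ℝ}
    (hβ : 0 < β) (hβγ : β < γ) (hγ : γ < Real.pi) :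
    0 < orient A (Complex.exp (β * Complex.I)) (Complex.exp (γ * Complex.I)) := by
  have hone : 0 < orient 1 (Complex.exp (β * Complex.I)) (Complex.exp (γ * Complex.I)) := by
    have := orient_exp_pos hβ hβγ (by linarith)
    rwa [Complex.ofReal_zero, zero_mul, Complex.exp_zero] at this
  have hneg_one : 0 < orient (-1) (Complex.exp (β * Complex.I)) (Complex.exp (γ * Complex.I)) := by
    have := orient_exp_pos hβγ hγ (by linarith)
    rwa [Complex.exp_pi_mul_I, orient_rotate] at this
  have haffine : ∀ B C, orient A B C =
      (1 + A.re) / 2 * orient 1 B C + (1 - A.re) / 2 * orient (-1) B C := by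
    intro B C
    simp only [orient, hA, Complex.one_re, Complex.one_im, Complex.neg_re, Complex.neg_im]
    ring
  rw [haffine]
  obtain hlt | hge := lt_or_ge A.re 0
  · have : 0 ≤ (1 + A.re) / 2 := by linarith [hA'.1]
    have : 0 < (1 - A.re) / 2 := by linarith
    positivity
  · have : 0 < (1 + A.re) / 2 := by linarith
    have : 0 ≤ (1 - A.re) / 2 := by linarith [hA'.2]
    positivity

theorem Sx_eq_ofReal (m k : ℕ) : Sx m k = ((-1 + 2 * k / (m + 1) : ℝ) : ℂ) := by
  rw [Sx]
  push_cast
  rfl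

theorem Sx_im (m k : ℕ) : (Sx m k).im = 0 := by
  rw [Sx_eq_ofReal, Complex.ofReal_im]

theorem Sx_re_strictMono (m : ℕ) : StrictMono fun k => (Sx m k).re := by
  intro i j hij
  simp only [Sx_eq_ofReal, Complex.ofReal_re]
  gcongr

theorem Sx_re_mem_Icc {m k : ℕ} (hk : k < m + 2) : (Sx m k).re ∈ Set.Icc (-1) 1 := by
  have hfirst : (Sx m 0).re = -1 := by simp [Sx_eq_ofReal]
  have hlast : (Sx m (m + 1)).re = 1 := by
    rw [Sx_eq_ofReal, Complex.ofReal_re]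
    push_cast
    field_simp
    ring
  rw [← hfirst, ← hlast]
  exact ⟨(Sx_re_strictMono m).monotone k.zero_le, (Sx_re_strictMono m).monotone (by omega)⟩

/-- The argument `πj/(n+1)` of the circle point `y_j = Sy n j`. -/
noncomputable def angle (n j : ℕ) : ℝ :=
  Real.pi * j / (n + 1)

theorem Sy_eq_exp_angle (n j : ℕ) : Sy n j = Complex.exp (angle n j * Complex.I) := by
  rw [Sy, angle]
  push_cast
  rfl

theorem angle_strictMono (n : ℕ) : StrictMono (angle n) := by
  intro i j hij
  unfold angle
  gcongr

theorem angle_pos {n j : ℕ} (hj : 0 < j) : 0 < angle n j := by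
  unfold angle
  positivity

theorem angle_lt_pi {n j : ℕ} (hj : j ≤ n) : angle n j < Real.pi := by
  have hlast : angle n (n + 1) = Real.pi := by
    rw [angle]
    push_cast
    field_simp
  exact (angle_strictMono n (Nat.lt_succ_of_le hj)).trans_eq hlast

/-- The points of `Sconfig m n` listed counterclockwise from `-1`: first `x_0, …, x_{m+1}`, then
`y_1, …, y_n`. -/
noncomputable def semicirclePoint (m n i : ℕ) : ℂ :=
  if i < m + 2 then Sx m i else Sy n (i - (m + 1))

theorem semicirclePoint_of_lt {m i : ℕ} (n : ℕ) (hi : i < m + 2) :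
    semicirclePoint m n i = Sx m i :=
  if_pos hi

theorem semicirclePoint_of_le {m i : ℕ} (n : ℕ) (hi : m + 2 ≤ i) :
    semicirclePoint m n i = Complex.exp (angle n (i - (m + 1)) * Complex.I) := by
  rw [semicirclePoint, if_neg hi.not_gt, Sy_eq_exp_angle]

theorem Sconfig_eq_image (m n : ℕ) :
    Sconfig m n = (range (m + 2 + n)).image (semicirclePoint m n) := by
  ext z
  simp only [Sconfig, mem_union, mem_image, mem_range, mem_Icc]
  constructor
  · rintro (⟨k, hk, rfl⟩ | ⟨j, hj, rfl⟩)
    · exact ⟨k, by omega, if_pos hk⟩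
    · refine ⟨j + (m + 1), by omega, ?_⟩
      rw [semicirclePoint, if_neg (by omega), Nat.add_sub_cancel]
  · rintro ⟨i, hi, rfl⟩
    unfold semicirclePoint
    split_ifs with him
    · exact .inl ⟨i, him, rfl⟩
    · exact .inr ⟨i - (m + 1), by omega, rfl⟩

theorem isSegmentConvex_semicirclePoint (m n : ℕ) :
    IsSegmentConvex (m + 2 + n) (m + 2) (semicirclePoint m n) where
  two_le := Nat.le_add_left 2 m
  im_eq_zero i hi := by rw [semicirclePoint_of_lt n hi, Sx_im]
  re_lt_re i j hij hj := by
    rw [semicirclePoint_of_lt n hj, semicirclePoint_of_lt n (hij.trans hj)]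
    exact Sx_re_strictMono m hij
  orient_pos i j k hij hjk hkN hk := by
    have hγ : angle n (k - (m + 1)) < Real.pi := angle_lt_pi (by omega)
    rw [semicirclePoint_of_le n hk]
    obtain hj | hj := lt_or_ge j (m + 2)
    · rw [semicirclePoint_of_lt n hj, semicirclePoint_of_lt n (hij.trans hj)]
      refine orient_pos_of_im_eq_zero (Sx_im m i) (Sx_im m j) (Sx_re_strictMono m hij) ?_
      rw [Complex.exp_ofReal_mul_I_im]
      exact Real.sin_pos_of_pos_of_lt_pi (angle_pos (by omega)) hγ
    have hβγ : angle n (j - (m + 1)) < angle n (k - (m + 1)) := angle_strictMono n (by omega)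
    rw [semicirclePoint_of_le n hj]
    obtain hi | hi := lt_or_ge i (m + 2)
    · rw [semicirclePoint_of_lt n hi]
      exact orient_exp_pos_of_mem_Icc (Sx_im m i) (Sx_re_mem_Icc hi) (angle_pos (by omega)) hβγ hγ
    · rw [semicirclePoint_of_le n hi]
      have hα : 0 < angle n (i - (m + 1)) := angle_pos (by omega)
      exact orient_exp_pos (angle_strictMono n (by omega)) hβγ (by linarith [Real.pi_pos])

theorem card_NC_Sconfig (m n : ℕ) :
    Nat.card (NC (Sconfig m n)) = #(noncrossingRels 0 (m + 2 + n) (m + 2)) := by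
  rw [Sconfig_eq_image, card_NC_image_range (isSegmentConvex_semicirclePoint m n)]

end Semicircle

/-- For `m, n ≥ 1`,
`s_{m,n} = 2 s_{m-1,n} + Σ_{k=1}^{n} s_{m-1,k-1} C_{n-k+1}` where
`s_{m,n} = |NC(S_{m,n})|` and `C_j` is the `j`-th Catalan number. -/
theorem nc_S_card_recursion (m n : ℕ) (hm : 1 ≤ m) (hn : 1 ≤ n) :
    Nat.card (NC (Sconfig m n)) =
      2 * Nat.card (NC (Sconfig (m - 1) n)) +
        ∑ k ∈ Finset.Icc 1 n,
          Nat.card (NC (Sconfig (m - 1) (k - 1))) * catalan (n - k + 1) := by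
  obtain ⟨l, rfl⟩ := Nat.exists_eq_add_of_le' hm
  have hshift (j : ℕ) : #(noncrossingRels 1 (l + 1 + 2 + j) (l + 1 + 2)) =
      Nat.card (NC (Sconfig l j)) := by
    rw [card_NC_Sconfig, ← card_noncrossingRels_add_one 0, add_right_comm _ j 1,
      add_right_comm l 2 1, zero_add]
  rw [Nat.add_sub_cancel, card_NC_Sconfig (l + 1),
    card_noncrossingRels_of_succ_lt (by omega) (by omega), zero_add, hshift,
    sum_Ico_eq_sum_range, Nat.add_sub_cancel_left, ← Finset.Ico_add_one_right_eq_Icc,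
    sum_Ico_eq_sum_range, Nat.add_sub_cancel]
  refine congrArg _ (sum_congr rfl fun j hj => ?_)
  rw [mem_range] at hj
  rw [hshift, Nat.add_sub_cancel_left, Nat.add_sub_add_left]
  congr 2
  omega
end
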